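/- arXiv:0912.1361 — 4 statements merged into one kernel-verified Lean document; each statement's English description precedes it below -/
import Mathlib

section
/- For every n ≥ 0, the number of simsun permutations of {1,…,n} equals E_{n+1}, the (n+1)-st Euler number, i.e., the number of up-down permutations of {1,…,n+1}. -/
/-- `π` is simsun: for every `k`, the subword of the one-line notation of `π`
consisting of the `k` smallest entries (i.e. the values `< k`, in 0-based form)
contains no three consecutive decreasing elements.  Here "three consecutive
decreasing elements of the subword" means positions `a < b < c` whose values are
all `< k`, with no position carrying a value `< k` strictly between `a` and `b`
nor strictly between `b` and `c`, and with `π a > π b > π c`. -/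
def IsSimsun {n : ℕ} (π : Equiv.Perm (Fin n)) : Prop :=
  ∀ k : ℕ, ¬ ∃ a b c : Fin n, a < b ∧ b < c ∧
    (π a : ℕ) < k ∧ (π b : ℕ) < k ∧ (π c : ℕ) < k ∧
    (∀ m : Fin n, a < m → m < b → k ≤ (π m : ℕ)) ∧
    (∀ m : Fin n, b < m → m < c → k ≤ (π m : ℕ)) ∧
    (π c : ℕ) < (π b : ℕ) ∧ (π b : ℕ) < (π a : ℕ)

/-- `π` is an up-down permutation: `π 1 < π 2 > π 3 < π 4 > ⋯`
(0-based: ascents at even positions, descents at odd positions). -/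
def IsUpDown {m : ℕ} (π : Equiv.Perm (Fin m)) : Prop :=
  ∀ (i : ℕ) (h : i + 1 < m),
    if i % 2 = 0 then π ⟨i, by omega⟩ < π ⟨i + 1, h⟩
    else π ⟨i + 1, h⟩ < π ⟨i, by omega⟩


open PowerSeries in
theorem ss_ode (t : ℕ → ℕ → ℂ) (h0 : t 0 0 = 1) (h0' : ∀ j, t 0 (j + 1) = 0)
    (hr : ∀ i j, t (i + 1) j = t i (j + 1) + t j i) :
    ∃ h : ℂ⟦X⟧, (∀ n, constantCoeff ((d⁄dX ℂ)^[n] h) = t n 0) ∧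
      2 * d⁄dX ℂ h = 1 + h ^ 2 := by
  set Z : ℕ → ℂ⟦X⟧ := fun j => mk fun i => (t i j + Complex.I * t j i) / (i.factorial : ℂ) with hZ
  set h : ℂ⟦X⟧ := mk fun i => t i 0 / (i.factorial : ℂ) with hh
  set F : ℂ⟦X⟧ := mk fun i => Complex.I ^ i / (i.factorial : ℂ) with hF
  have hfac : ∀ n : ℕ, ((n + 1).factorial : ℂ) = (n + 1) * n.factorial := by
    intro n; rw [Nat.factorial_succ]; push_cast; ring
  have hne : ∀ n : ℕ, (n.factorial : ℂ) ≠ 0 := fun n => by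
    exact_mod_cast Nat.factorial_ne_zero n
  have hne1 : ∀ n : ℕ, (n + 1 : ℂ) ≠ 0 := fun n => by exact_mod_cast Nat.succ_ne_zero n
  have hI : (C Complex.I : ℂ⟦X⟧) * C Complex.I = -1 := by
    rw [← map_mul, Complex.I_mul_I]; simp
  have dF : d⁄dX ℂ F = C Complex.I * F := by
    ext n
    rw [coeff_derivative, coeff_C_mul, hF, coeff_mk, coeff_mk, hfac]
    have := hne n; have := hne1 n
    field_simp
    ring
  have dZ : ∀ j, d⁄dX ℂ (Z j) = Z (j + 1) - C Complex.I * Z j := by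
    intro j
    ext n
    rw [coeff_derivative, map_sub, coeff_C_mul, hZ]
    simp only [coeff_mk]
    rw [hfac, hr n j, hr j n]
    have := hne n; have := hne1 n
    field_simp
    linear_combination (t j n) * Complex.I_sq
  have dFZ : ∀ j, d⁄dX ℂ (F * Z j) = F * Z (j + 1) := by
    intro j
    rw [Derivation.leibniz, dF, dZ]
    simp only [smul_eq_mul]
    ring
  have itFZ : ∀ n, (d⁄dX ℂ)^[n] (F * Z 0) = F * Z n := by
    intro n
    induction n with
    | zero => rfl
    | succ n ih => rw [Function.iterate_succ_apply', ih, dFZ]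
  have cF : constantCoeff F = 1 := by
    rw [← coeff_zero_eq_constantCoeff_apply, hF, coeff_mk]; simp
  have cZ : ∀ n, constantCoeff (Z n) = t 0 n + Complex.I * t n 0 := by
    intro n
    rw [← coeff_zero_eq_constantCoeff_apply, hZ, coeff_mk]; simp
  have hZ0 : Z 0 = h + C Complex.I := by
    ext n
    rw [hZ, hh, map_add, coeff_mk, coeff_mk, coeff_C]
    cases n with
    | zero => simp [h0]
    | succ n => simp [h0']
  have key : F * (h + C Complex.I) = 1 + C Complex.I * h := by
    rw [← hZ0]
    ext n
    have h1 := constantCoeff_iterate_derivative (F * Z 0) n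
    rw [itFZ, map_mul, cF, cZ, one_mul] at h1
    rw [map_add, coeff_C_mul, hh, coeff_mk, coeff_one]
    have := hne n
    cases n with
    | zero => simp [h0] at h1 ⊢; rw [← h1]
    | succ n =>
      simp only [h0', zero_add] at h1
      simp only [Nat.succ_ne_zero, if_false, zero_add]
      field_simp
      rw [h1]
      ring
  refine ⟨h, ?_, ?_⟩
  · intro n
    rw [constantCoeff_iterate_derivative, hh, coeff_mk]
    have := hne n
    field_simp
  · have k2 := congrArg (d⁄dX ℂ) key
    simp only [Derivation.leibniz, map_add, dF, smul_eq_mul, derivative_C, derivative_one,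
      mul_zero, add_zero, zero_add] at k2
    linear_combination (h + C Complex.I) * k2
      - (d⁄dX ℂ h + (h + C Complex.I) * C Complex.I) * key + (d⁄dX ℂ h - h * C Complex.I - h * h - 1) * hI

def ssIns {n : ℕ} (p v : Fin (n + 1)) (π : Equiv.Perm (Fin n)) : Equiv.Perm (Fin (n + 1)) :=
  (finSuccEquiv' p).trans ((Equiv.optionCongr π).trans (finSuccEquiv' v).symm)

theorem ssIns_at {n : ℕ} (p v : Fin (n + 1)) (π : Equiv.Perm (Fin n)) : ssIns p v π p = v := by
  simp [ssIns]

theorem ssIns_succAbove {n : ℕ} (p v : Fin (n + 1)) (π : Equiv.Perm (Fin n)) (i : Fin n) :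
    ssIns p v π (p.succAbove i) = v.succAbove (π i) := by
  simp [ssIns]

theorem ssIns_inj {n : ℕ} (p v : Fin (n + 1)) (π π' : Equiv.Perm (Fin n))
    (h : ssIns p v π = ssIns p v π') : π = π' := by
  ext i
  have := congrArg (fun σ => σ (p.succAbove i)) h
  simp only [ssIns_succAbove] at this
  rw [Fin.succAbove_right_injective this]

theorem ssIns_bij_pos (n : ℕ) : Function.Bijective
    (fun x : Fin (n + 1) × Equiv.Perm (Fin n) => ssIns x.1 (Fin.last n) x.2) := by
  rw [Fintype.bijective_iff_injective_and_card]
  constructor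
  · rintro ⟨p, π⟩ ⟨q, π'⟩ h
    simp only at h
    have : p = q := by
      have h1 := ssIns_at p (Fin.last n) π
      rw [h] at h1
      have h2 := ssIns_at q (Fin.last n) π'
      exact (ssIns q (Fin.last n) π').injective (h1.trans h2.symm)
    subst this
    rw [ssIns_inj _ _ _ _ h]
  · simp [Fintype.card_perm, Nat.factorial_succ]

theorem ssIns_bij_val (n : ℕ) : Function.Bijective
    (fun x : Fin (n + 1) × Equiv.Perm (Fin n) => ssIns 0 x.1 (x.2.trans Fin.revPerm)) := by
  rw [Fintype.bijective_iff_injective_and_card]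
  constructor
  · rintro ⟨p, π⟩ ⟨q, π'⟩ h
    simp only at h
    have : p = q := by
      have h1 := ssIns_at 0 p (π.trans Fin.revPerm)
      rw [h, ssIns_at] at h1
      exact h1.symm
    subst this
    have := ssIns_inj _ _ _ _ h
    have : π = π' := by
      ext i
      have := congrArg (fun σ => σ i) this
      simp at this
      rw [this]
    rw [this]
  · simp [Fintype.card_perm, Nat.factorial_succ]

open Classical in
noncomputable def ssA (n k : ℕ) : ℕ :=
  ((Finset.univ : Finset (Equiv.Perm (Fin n))).filter
    (fun π => IsUpDown π ∧ ∀ h : 0 < n, ((π ⟨0, h⟩ : Fin n) : ℕ) = k)).card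

theorem ss_succAbove_rev_lt {n : ℕ} (v : Fin (n + 1)) (x y : Fin n) :
    v.succAbove (Fin.rev x) < v.succAbove (Fin.rev y) ↔ y < x := by
  rw [Fin.succAbove_lt_succAbove_iff, Fin.rev_lt_rev]

theorem ss_updown_ins {n : ℕ} (hn : 0 < n) (v : Fin (n + 1)) (π : Equiv.Perm (Fin n)) :
    IsUpDown (ssIns 0 v (π.trans Fin.revPerm)) ↔ IsUpDown π ∧ (v : ℕ) + (π ⟨0, hn⟩ : ℕ) < n := by
  set σ := ssIns 0 v (π.trans Fin.revPerm) with hσ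
  have h0 : σ ⟨0, by omega⟩ = v := ssIns_at 0 v _
  have hs : ∀ i (h : i < n), σ ⟨i + 1, by omega⟩ = v.succAbove (Fin.rev (π ⟨i, h⟩)) := by
    intro i h
    have := ssIns_succAbove 0 v (π.trans Fin.revPerm) ⟨i, h⟩
    rw [Fin.succAbove_zero] at this
    exact this
  have hv : v < v.succAbove (Fin.rev (π ⟨0, hn⟩)) ↔ (v : ℕ) + (π ⟨0, hn⟩ : ℕ) < n := by
    rw [Fin.lt_succAbove_iff_le_castSucc, Fin.le_def]
    simp [Fin.val_rev]
    omega
  constructor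
  · intro H
    constructor
    · intro i h
      have := H (i + 1) (by omega)
      rw [hs i (by omega), hs (i + 1) h] at this
      simp only [ss_succAbove_rev_lt] at this
      split_ifs at this ⊢ <;> first | assumption | omega
    · have := H 0 (by omega)
      rw [if_pos rfl, h0, hs 0 hn, hv] at this
      exact this
  · rintro ⟨H, H0⟩ i h
    cases i with
    | zero =>
      rw [if_pos rfl, h0, hs 0 hn, hv]
      exact H0
    | succ i =>
      have := H i (by omega)
      rw [hs i (by omega), hs (i + 1) (by omega)]
      simp only [ss_succAbove_rev_lt]
      split_ifs at this ⊢ <;> first | assumption | omega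

open Classical in
theorem ssA_rec (n k : ℕ) (hn : 0 < n) (hk : k ≤ n) :
    ssA (n + 1) k = ∑ j ∈ Finset.range (n - k), ssA n j := by
  have e1 : ssA (n + 1) k = ((Finset.univ : Finset (Equiv.Perm (Fin n))).filter
      (fun π => IsUpDown π ∧ k + (π ⟨0, hn⟩ : ℕ) < n)).card := by
    symm
    unfold ssA
    refine Finset.card_bij (fun π _ => ssIns 0 ⟨k, by omega⟩ (π.trans Fin.revPerm)) ?_ ?_ ?_
    · intro π hπ
      simp only [Finset.mem_filter, Finset.mem_univ, true_and] at hπ ⊢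
      refine ⟨(ss_updown_ins hn _ π).2 hπ, fun h => ?_⟩
      have := ssIns_at 0 ⟨k, by omega⟩ (π.trans Fin.revPerm)
      exact congrArg Fin.val this
    · intro π _ π' _ h
      have := @(ssIns_bij_val n).1 (⟨k, by omega⟩, π) (⟨k, by omega⟩, π') h
      exact (Prod.mk.inj this).2
    · intro σ hσ
      simp only [Finset.mem_filter, Finset.mem_univ, true_and] at hσ
      obtain ⟨⟨v, π⟩, rfl⟩ := (ssIns_bij_val n).2 σ
      simp only at hσ ⊢
      have hv : v = ⟨k, by omega⟩ := by
        have := ssIns_at 0 v (π.trans Fin.revPerm)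
        have h2 := hσ.2 (by omega)
        ext
        exact (congrArg Fin.val this).symm.trans h2
      subst hv
      refine ⟨π, ?_, rfl⟩
      simp only [Finset.mem_filter, Finset.mem_univ, true_and]
      exact (ss_updown_ins hn _ π).1 hσ.1
  rw [e1, Finset.card_eq_sum_card_fiberwise (f := fun π => (π ⟨0, hn⟩ : ℕ))
    (t := Finset.range (n - k))]
  · refine Finset.sum_congr rfl fun j hj => ?_
    unfold ssA
    congr 1
    ext π
    simp only [Finset.mem_filter, Finset.mem_univ, true_and, Finset.mem_range] at hj ⊢
    constructor
    · rintro ⟨⟨h1, h2⟩, h3⟩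
      exact ⟨h1, fun _ => h3⟩
    · rintro ⟨h1, h2⟩
      have := h2 hn
      exact ⟨⟨h1, by omega⟩, this⟩
  · intro π hπ
    simp only [Finset.coe_filter, Finset.mem_univ, true_and, Set.mem_ofPred_eq, Finset.coe_range,
      Set.mem_Iio] at hπ ⊢
    omega

open Classical in
theorem ssA_total (n : ℕ) (hn : 0 < n) :
    Nat.card {π : Equiv.Perm (Fin n) // IsUpDown π} = ssA (n + 1) 0 := by
  rw [ssA_rec n 0 hn (by omega), Nat.card_eq_fintype_card, Fintype.card_subtype,
    Finset.card_eq_sum_card_fiberwise (f := fun π => (π ⟨0, hn⟩ : ℕ))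
    (t := Finset.range (n - 0))]
  · refine Finset.sum_congr rfl fun j hj => ?_
    unfold ssA
    congr 1
    ext π
    simp only [Finset.mem_filter, Finset.mem_univ, true_and]
    exact ⟨fun h => ⟨h.1, fun _ => h.2⟩, fun h => ⟨h.1, h.2 hn⟩⟩
  · intro π hπ
    simp

theorem ssA_one : ssA 1 0 = 1 := by
  classical
  unfold ssA
  rw [Finset.filter_true_of_mem]
  · simp
  · intro π _
    refine ⟨fun i h => by omega, fun h => by omega⟩

theorem ss_up_ode : ∃ h : PowerSeries ℂ,
    (∀ n, 0 < n → PowerSeries.constantCoeff ((PowerSeries.derivative ℂ)^[n] h) =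
      (Nat.card {π : Equiv.Perm (Fin n) // IsUpDown π} : ℂ)) ∧
    PowerSeries.constantCoeff h = 1 ∧
      2 * PowerSeries.derivative ℂ h = 1 + h ^ 2 := by
  obtain ⟨h, h1, h2⟩ := ss_ode (fun i j => (ssA (i + j + 1) j : ℂ)) (by simp [ssA_one])
    (by
      intro j
      have := ssA_rec (j + 1) (j + 1) (by omega) le_rfl
      simp at this
      simp [this])
    (by
      intro i j
      have a := ssA_rec (i + 1 + j) j (by omega) (by omega)
      have b := ssA_rec (i + (j + 1)) (j + 1) (by omega) (by omega)
      rw [show i + 1 + j - j = i + 1 by omega, Finset.sum_range_succ] at a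
      rw [show i + (j + 1) - (j + 1) = i by omega] at b
      rw [show i + (j + 1) = i + 1 + j by omega] at b ⊢
      rw [← b] at a
      rw [show j + i + 1 = i + 1 + j by omega]
      exact_mod_cast a)
  refine ⟨h, ?_, ?_, h2⟩
  · intro n hn
    rw [h1, ssA_total n hn]
  · have := h1 0
    simpa [ssA_one] using this

open Classical in
noncomputable def ssD {n : ℕ} (π : Equiv.Perm (Fin n)) : Finset ℕ :=
  (Finset.range n).filter
    (fun i => ∃ h : i + 1 < n, (π ⟨i + 1, h⟩ : ℕ) < (π ⟨i, Nat.lt_of_succ_lt h⟩ : ℕ))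

theorem mem_ssD {n : ℕ} (π : Equiv.Perm (Fin n)) (i : ℕ) :
    i ∈ ssD π ↔ ∃ h : i + 1 < n, (π ⟨i + 1, h⟩ : ℕ) < (π ⟨i, Nat.lt_of_succ_lt h⟩ : ℕ) := by
  simp only [ssD, Finset.mem_filter, Finset.mem_range, and_iff_right_iff_imp]
  rintro ⟨h, _⟩
  omega

def ssNC (D : Finset ℕ) : Prop := ∀ i ∈ D, i + 1 ∉ D

theorem ss_nc {n : ℕ} {π : Equiv.Perm (Fin n)} (H : IsSimsun π) : ssNC (ssD π) := by
  intro i hi hi'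
  rw [mem_ssD] at hi hi'
  obtain ⟨h, h1⟩ := hi
  obtain ⟨h', h2⟩ := hi'
  refine H n ⟨⟨i, by omega⟩, ⟨i + 1, h⟩, ⟨i + 1 + 1, h'⟩, ?_, ?_, ?_, ?_, ?_, ?_, ?_, h2, h1⟩
  · simp
  · simp
  · exact Fin.isLt _
  · exact Fin.isLt _
  · exact Fin.isLt _
  · intro m h3 h4
    rw [Fin.lt_def] at h3 h4
    simp at h3 h4
    omega
  · intro m h3 h4
    rw [Fin.lt_def] at h3 h4
    simp at h3 h4
    omega

theorem ss_val {n : ℕ} (p : Fin (n + 1)) (π : Equiv.Perm (Fin n)) (i : Fin n) :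
    ((ssIns p (Fin.last n) π (p.succAbove i) : Fin (n + 1)) : ℕ) = π i := by
  rw [ssIns_succAbove, Fin.succAbove_last]
  rfl

theorem ss_val_at {n : ℕ} (p : Fin (n + 1)) (π : Equiv.Perm (Fin n)) :
    ((ssIns p (Fin.last n) π p : Fin (n + 1)) : ℕ) = n := by
  rw [ssIns_at]
  rfl

theorem ss_simsun_ins {n : ℕ} (p : Fin (n + 1)) (π : Equiv.Perm (Fin n)) :
    IsSimsun (ssIns p (Fin.last n) π) ↔
      IsSimsun π ∧ ssNC (ssD (ssIns p (Fin.last n) π)) := by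
  set σ := ssIns p (Fin.last n) π with hσ
  have hv : ∀ i, ((σ (p.succAbove i) : Fin (n + 1)) : ℕ) = π i := ss_val p π
  have hp : ((σ p : Fin (n + 1)) : ℕ) = n := ss_val_at p π
  constructor
  · intro H
    refine ⟨?_, ss_nc H⟩
    rintro k ⟨a, b, c, hab, hbc, ha, hb, hc, h1, h2, h3, h4⟩
    refine H (min k n) ⟨p.succAbove a, p.succAbove b, p.succAbove c,
      Fin.succAbove_lt_succAbove_iff.2 hab, Fin.succAbove_lt_succAbove_iff.2 hbc,
      ?_, ?_, ?_, ?_, ?_, ?_, ?_⟩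
    · rw [hv]; have := (π a).isLt; omega
    · rw [hv]; have := (π b).isLt; omega
    · rw [hv]; have := (π c).isLt; omega
    · intro m hm hm'
      rcases Fin.eq_self_or_eq_succAbove p m with rfl | ⟨m, rfl⟩
      · rw [hp]; omega
      · rw [hv]
        have := h1 m (Fin.succAbove_lt_succAbove_iff.1 hm) (Fin.succAbove_lt_succAbove_iff.1 hm')
        omega
    · intro m hm hm'
      rcases Fin.eq_self_or_eq_succAbove p m with rfl | ⟨m, rfl⟩
      · rw [hp]; omega
      · rw [hv]
        have := h2 m (Fin.succAbove_lt_succAbove_iff.1 hm) (Fin.succAbove_lt_succAbove_iff.1 hm')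
        omega
    · rw [hv, hv]; exact h3
    · rw [hv, hv]; exact h4
  · rintro ⟨H, HN⟩ k ⟨a, b, c, hab, hbc, ha, hb, hc, h1, h2, h3, h4⟩
    rcases Nat.lt_or_ge n k with hk | hk
    · have hb' : (b : ℕ) = a + 1 := by
        by_contra hne
        have := h1 ⟨a + 1, by have := b.isLt; rw [Fin.lt_def] at hab; omega⟩
          (by rw [Fin.lt_def]; simp) (by rw [Fin.lt_def] at hab ⊢; simp; omega)
        have := (σ ⟨a + 1, by have := b.isLt; rw [Fin.lt_def] at hab; omega⟩).isLt
        omega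
      have hc' : (c : ℕ) = b + 1 := by
        by_contra hne
        have := h2 ⟨b + 1, by have := c.isLt; rw [Fin.lt_def] at hbc; omega⟩
          (by rw [Fin.lt_def]; simp) (by rw [Fin.lt_def] at hbc ⊢; simp; omega)
        have := (σ ⟨b + 1, by have := c.isLt; rw [Fin.lt_def] at hbc; omega⟩).isLt
        omega
      refine HN a ?_ ?_
      · rw [mem_ssD]
        refine ⟨by omega, ?_⟩
        convert h4 using 4
        exact hb'.symm
      · rw [mem_ssD]
        refine ⟨by omega, ?_⟩
        convert h3 using 4
        · omega
        · omega
    · rcases Fin.eq_self_or_eq_succAbove p a with rfl | ⟨a, rfl⟩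
      · omega
      rcases Fin.eq_self_or_eq_succAbove p b with rfl | ⟨b, rfl⟩
      · omega
      rcases Fin.eq_self_or_eq_succAbove p c with rfl | ⟨c, rfl⟩
      · omega
      rw [hv] at ha hb hc
      rw [hv, hv] at h3 h4
      refine H k ⟨a, b, c, Fin.succAbove_lt_succAbove_iff.1 hab,
        Fin.succAbove_lt_succAbove_iff.1 hbc, ha, hb, hc, ?_, ?_, h3, h4⟩
      · intro m hm hm'
        have := h1 (p.succAbove m) (Fin.succAbove_lt_succAbove_iff.2 hm)
          (Fin.succAbove_lt_succAbove_iff.2 hm')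
        rwa [hv] at this
      · intro m hm hm'
        have := h2 (p.succAbove m) (Fin.succAbove_lt_succAbove_iff.2 hm)
          (Fin.succAbove_lt_succAbove_iff.2 hm')
        rwa [hv] at this

def ssJ (n p : ℕ) (D : Finset ℕ) : Finset ℕ :=
  (if p < n then {p} else ∅) ∪ (D.filter (fun i => i + 1 < p) ∪
    (D.filter (fun i => p ≤ i)).image (· + 1))

theorem mem_ssJ (n p : ℕ) (D : Finset ℕ) (i : ℕ) : i ∈ ssJ n p D ↔
    (i = p ∧ p < n) ∨ (i + 1 < p ∧ i ∈ D) ∨ (p < i ∧ i - 1 ∈ D) := by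
  unfold ssJ
  simp only [Finset.mem_union, Finset.mem_filter, Finset.mem_image]
  have e1 : (i ∈ if p < n then ({p} : Finset ℕ) else ∅) ↔ i = p ∧ p < n := by
    split_ifs with h <;> simp [h]
  have e2 : (∃ a, (a ∈ D ∧ p ≤ a) ∧ a + 1 = i) ↔ p < i ∧ i - 1 ∈ D := by
    constructor
    · rintro ⟨a, ⟨h1, h2⟩, rfl⟩
      exact ⟨by omega, by simpa using h1⟩
    · rintro ⟨h1, h2⟩
      exact ⟨i - 1, ⟨h2, by omega⟩, by omega⟩
  rw [e1, e2]
  tauto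

theorem ssD_ins {n : ℕ} (p : Fin (n + 1)) (π : Equiv.Perm (Fin n)) :
    ssD (ssIns p (Fin.last n) π) = ssJ n p (ssD π) := by
  set σ := ssIns p (Fin.last n) π with hσ
  have hv : ∀ i, ((σ (p.succAbove i) : Fin (n + 1)) : ℕ) = π i := ss_val p π
  have hp : ∀ h : (p : ℕ) < n + 1, ((σ ⟨p, h⟩ : Fin (n + 1)) : ℕ) = n := fun h => ss_val_at p π
  have hlt : ∀ i (h : i < n) (h' : i < n + 1), i < (p : ℕ) →
      ((σ ⟨i, h'⟩ : Fin (n + 1)) : ℕ) = π ⟨i, h⟩ := by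
    intro i h h' h2
    rw [← hv ⟨i, h⟩, Fin.succAbove_of_castSucc_lt _ _ (by rw [Fin.lt_def]; exact h2)]
    rfl
  have hgt : ∀ i (h : i < n) (h' : i + 1 < n + 1), (p : ℕ) ≤ i →
      ((σ ⟨i + 1, h'⟩ : Fin (n + 1)) : ℕ) = π ⟨i, h⟩ := by
    intro i h h' h2
    rw [← hv ⟨i, h⟩, Fin.succAbove_of_le_castSucc _ _ (by rw [Fin.le_def]; exact h2)]
    rfl
  have hpn := p.isLt
  ext i
  rw [mem_ssJ, mem_ssD, mem_ssD, mem_ssD]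
  rcases lt_trichotomy i (p : ℕ) with h | h | h
  · rcases Nat.lt_or_ge (i + 1) p with h1 | h1
    · constructor
      · rintro ⟨h2, h3⟩
        rw [hlt (i + 1) (by omega) _ h1, hlt i (by omega) _ h] at h3
        exact Or.inr (Or.inl ⟨h1, by omega, h3⟩)
      · rintro (⟨h2, _⟩ | ⟨_, h2, h3⟩ | ⟨h2, _⟩)
        · omega
        · refine ⟨by omega, ?_⟩
          rw [hlt (i + 1) (by omega) _ h1, hlt i (by omega) _ h]
          exact h3
        · omega
    · have h1 : i + 1 = p := by omega
      constructor
      · rintro ⟨h2, h3⟩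
        rw [hlt i (by omega) _ h] at h3
        simp only [h1] at h3
        rw [hp] at h3
        have := (π ⟨i, by omega⟩).isLt
        omega
      · rintro (⟨h2, _⟩ | ⟨_, h2, h3⟩ | ⟨h2, _⟩) <;> omega
  · subst h
    constructor
    · rintro ⟨h2, h3⟩
      exact Or.inl ⟨rfl, by omega⟩
    · rintro (⟨_, h2⟩ | ⟨_, h2, h3⟩ | ⟨h2, _⟩)
      · refine ⟨by omega, ?_⟩
        rw [hp, hgt p h2 _ le_rfl]
        exact Fin.isLt _
      · omega
      · omega
  · obtain ⟨j, rfl⟩ : ∃ j, i = j + 1 := ⟨i - 1, by omega⟩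
    simp only [Nat.add_sub_cancel]
    constructor
    · rintro ⟨h2, h3⟩
      rw [hgt (j + 1) (by omega) _ (by omega), hgt j (by omega) _ (by omega)] at h3
      exact Or.inr (Or.inr ⟨h, by omega, h3⟩)
    · rintro (⟨h2, _⟩ | ⟨_, h2, h3⟩ | ⟨_, h2, h3⟩)
      · omega
      · omega
      · refine ⟨by omega, ?_⟩
        rw [hgt (j + 1) (by omega) _ (by omega), hgt j (by omega) _ (by omega)]
        exact h3

theorem ssJ_nc (n p : ℕ) (D : Finset ℕ) (hD : ∀ i ∈ D, i + 1 < n) (hN : ssNC D) :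
    ssNC (ssJ n p D) ↔ p ∉ D := by
  constructor
  · intro H hp
    have := hD p hp
    refine H p ?_ ?_
    · rw [mem_ssJ]; exact Or.inl ⟨rfl, by omega⟩
    · rw [mem_ssJ]; exact Or.inr (Or.inr ⟨by omega, hp⟩)
  · intro hp i hi hi'
    rw [mem_ssJ] at hi hi'
    rcases hi with ⟨rfl, h⟩ | ⟨h, h1⟩ | ⟨h, h1⟩
    · rcases hi' with ⟨h', _⟩ | ⟨h', h2⟩ | ⟨h', h2⟩
      · omega
      · omega
      · exact hp h2
    · rcases hi' with ⟨h', _⟩ | ⟨h', h2⟩ | ⟨h', h2⟩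
      · omega
      · exact hN _ h1 h2
      · omega
    · rcases hi' with ⟨h', _⟩ | ⟨h', h2⟩ | ⟨h', h2⟩
      · omega
      · omega
      · refine hN _ h1 ?_
        rwa [show i - 1 + 1 = i + 1 - 1 by omega]

theorem ssJ_card (n p : ℕ) (D : Finset ℕ) (hpn : p ≤ n) (hD : ∀ i ∈ D, i + 1 < n) :
    (ssJ n p D).card = if p ∈ insert n (D.image (· + 1)) then D.card else D.card + 1 := by
  have c1 : (ssJ n p D).card = (if p < n then 1 else 0) + ((D.filter (fun i => i + 1 < p)).card +
      (D.filter (fun i => p ≤ i)).card) := by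
    unfold ssJ
    rw [Finset.card_union_of_disjoint, Finset.card_union_of_disjoint,
      Finset.card_image_of_injective _ (add_left_injective 1)]
    · split_ifs <;> simp
    · rw [Finset.disjoint_left]
      intro i hi hi'
      simp only [Finset.mem_filter, Finset.mem_image] at hi hi'
      obtain ⟨a, h, rfl⟩ := hi'
      omega
    · rw [Finset.disjoint_left]
      intro i hi hi'
      simp only [Finset.mem_union, Finset.mem_filter, Finset.mem_image] at hi hi'
      have : i = p := by
        split_ifs at hi <;> simp at hi
        exact hi
      rcases hi' with h | ⟨a, h, rfl⟩ <;> omega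
  have c2 : D.card = (D.filter (fun i => i + 1 < p)).card +
      ((D.filter (fun i => p ≤ i)).card + (D.filter (fun i => i + 1 = p)).card) := by
    rw [← Finset.card_union_of_disjoint, ← Finset.card_union_of_disjoint]
    · congr 1
      ext i
      simp only [Finset.mem_union, Finset.mem_filter]
      constructor
      · intro h
        rcases lt_trichotomy (i + 1) p with h' | h' | h'
        · exact Or.inl ⟨h, h'⟩
        · exact Or.inr (Or.inr ⟨h, h'⟩)
        · exact Or.inr (Or.inl ⟨h, by omega⟩)
      · tauto
    · rw [Finset.disjoint_left]
      intro i hi hi'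
      simp only [Finset.mem_union, Finset.mem_filter] at hi hi'
      omega
    · rw [Finset.disjoint_left]
      intro i hi hi'
      simp only [Finset.mem_filter] at hi hi'
      omega
  have c3 : (D.filter (fun i => i + 1 = p)).card = if p ∈ D.image (· + 1) then 1 else 0 := by
    split_ifs with h
    · obtain ⟨a, ha, rfl⟩ := Finset.mem_image.1 h
      rw [Finset.card_eq_one]
      refine ⟨a, ?_⟩
      ext i
      simp only [Finset.mem_filter, Finset.mem_singleton]
      constructor
      · intro h; omega
      · rintro rfl; exact ⟨ha, rfl⟩
    · rw [Finset.card_eq_zero, Finset.filter_eq_empty_iff]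
      intro i hi h'
      exact h (Finset.mem_image.2 ⟨i, hi, h'⟩)
  have c4 : n ∉ D.image (· + 1) := by
    intro h
    obtain ⟨a, h, h'⟩ := Finset.mem_image.1 h
    have := hD a h
    omega
  rw [c1]
  simp only [Finset.mem_insert]
  by_cases hp : p = n
  · subst hp
    rw [if_neg c4] at c3
    simp only [lt_irrefl, if_false, true_or, if_true]
    omega
  · rw [if_pos (by omega : p < n)]
    simp only [hp, false_or]
    split_ifs at c3 ⊢ <;> omega

open Classical in
theorem ssJ_sum {R : Type*} [CommRing R] (w : ℕ → R) (n : ℕ) (D : Finset ℕ)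
    (hD : ∀ i ∈ D, i + 1 < n) (hN : ssNC D) :
    2 * D.card ≤ n ∧
    (∑ p ∈ Finset.range (n + 1), if ssNC (ssJ n p D) then w (ssJ n p D).card else 0) =
      ((D.card + 1 : ℕ) : R) * w D.card + ((n - 2 * D.card : ℕ) : R) * w (D.card + 1) := by
  set P := insert n (D.image (· + 1)) with hP
  have cP : P.card = D.card + 1 := by
    rw [hP, Finset.card_insert_of_notMem, Finset.card_image_of_injective _ (add_left_injective 1)]
    intro h
    obtain ⟨a, h, h'⟩ := Finset.mem_image.1 h
    have := hD a h
    omega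
  have hdis : Disjoint D P := by
    rw [Finset.disjoint_left]
    intro i hi hi'
    have := hD i hi
    rcases Finset.mem_insert.1 hi' with rfl | h
    · omega
    · obtain ⟨a, ha, rfl⟩ := Finset.mem_image.1 h
      exact hN a ha hi
  have hPr : P ⊆ Finset.range (n + 1) := by
    intro i hi
    rw [Finset.mem_range]
    rcases Finset.mem_insert.1 hi with rfl | h
    · omega
    · obtain ⟨a, ha, rfl⟩ := Finset.mem_image.1 h
      have := hD a ha
      omega
  have hDr : D ⊆ Finset.range (n + 1) := by
    intro i hi
    have := hD i hi
    rw [Finset.mem_range]; omega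
  have hU : D ∪ P ⊆ Finset.range (n + 1) := Finset.union_subset hDr hPr
  have cU : (D ∪ P).card = 2 * D.card + 1 := by
    rw [Finset.card_union_of_disjoint hdis, cP]; ring
  have cle := Finset.card_le_card hU
  rw [cU, Finset.card_range] at cle
  refine ⟨by omega, ?_⟩
  have crest : (Finset.range (n + 1) \ (D ∪ P)).card = n - 2 * D.card := by
    rw [Finset.card_sdiff_of_subset hU, cU, Finset.card_range]; omega
  rw [← Finset.sum_sdiff hU, Finset.sum_union hdis]
  have s1 : (∑ p ∈ D, if ssNC (ssJ n p D) then w (ssJ n p D).card else 0) = 0 := by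
    refine Finset.sum_eq_zero fun p hp => ?_
    rw [if_neg]
    rw [ssJ_nc n p D hD hN]
    simpa using hp
  have s2 : (∑ p ∈ P, if ssNC (ssJ n p D) then w (ssJ n p D).card else 0) =
      ∑ p ∈ P, w D.card := by
    refine Finset.sum_congr rfl fun p hp => ?_
    rw [if_pos, ssJ_card n p D _ hD, if_pos hp]
    · have := Finset.mem_range.1 (hPr hp); omega
    · rw [ssJ_nc n p D hD hN]
      exact fun h => Finset.disjoint_left.1 hdis h hp
  have s3 : (∑ p ∈ Finset.range (n + 1) \ (D ∪ P),
      if ssNC (ssJ n p D) then w (ssJ n p D).card else 0) =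
      ∑ p ∈ Finset.range (n + 1) \ (D ∪ P), w (D.card + 1) := by
    refine Finset.sum_congr rfl fun p hp => ?_
    rw [Finset.mem_sdiff, Finset.mem_union, not_or, Finset.mem_range] at hp
    rw [if_pos, ssJ_card n p D (by omega) hD, if_neg hp.2.2]
    rw [ssJ_nc n p D hD hN]
    exact hp.2.1
  rw [s1, s2, s3, Finset.sum_const, Finset.sum_const, crest, cP, nsmul_eq_mul, nsmul_eq_mul]
  ring

open Classical in
theorem ss_sum_rec {R : Type*} [CommRing R] (w : ℕ → R) (n : ℕ) :
    (∑ σ : Equiv.Perm (Fin (n + 1)), if IsSimsun σ then w (ssD σ).card else 0) =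
    ∑ π : Equiv.Perm (Fin n), if IsSimsun π then
      ((ssD π).card + 1 : ℕ) * w (ssD π).card + (n - 2 * (ssD π).card : ℕ) * w ((ssD π).card + 1)
      else 0 := by
  rw [← (Equiv.ofBijective _ (ssIns_bij_pos n)).sum_comp, Fintype.sum_prod_type_right]
  refine Finset.sum_congr rfl fun π _ => ?_
  simp only [Equiv.ofBijective_apply, ss_simsun_ins, ssD_ins]
  by_cases h : IsSimsun π
  · simp only [h, true_and, if_true]
    rw [← (ssJ_sum w n (ssD π) (fun i hi => ((mem_ssD π i).1 hi).1) (ss_nc h)).2]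
    rw [Finset.sum_range]
  · simp [h]

open Classical PowerSeries in
theorem ss_iter (h : ℂ⟦X⟧) (hh : d⁄dX ℂ (d⁄dX ℂ h) = h * d⁄dX ℂ h) (n : ℕ) :
    (d⁄dX ℂ)^[n + 1] h = ∑ π : Equiv.Perm (Fin n), if IsSimsun π then
      (d⁄dX ℂ h) ^ ((ssD π).card + 1) * h ^ (n - 2 * (ssD π).card) else 0 := by
  induction n with
  | zero =>
    have h1 : IsSimsun (1 : Equiv.Perm (Fin 0)) := by
      rintro k ⟨a, _⟩
      exact a.elim0
    have h2 : ssD (1 : Equiv.Perm (Fin 0)) = ∅ := by simp [ssD]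
    rw [Fintype.sum_unique]
    have e : (default : Equiv.Perm (Fin 0)) = 1 := Subsingleton.elim _ _
    rw [e, if_pos h1, h2]
    simp
  | succ n ih =>
    rw [Function.iterate_succ_apply', ih, map_sum,
      ss_sum_rec (fun k => (d⁄dX ℂ h) ^ (k + 1) * h ^ (n + 1 - 2 * k)) n]
    refine Finset.sum_congr rfl fun π _ => ?_
    by_cases hs : IsSimsun π
    · rw [if_pos hs, if_pos hs]
      have hle := (ssJ_sum (fun _ => (0 : ℂ)) n (ssD π)
        (fun i hi => ((mem_ssD π i).1 hi).1) (ss_nc hs)).1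
      generalize (ssD π).card = k at *
      obtain ⟨m, rfl⟩ : ∃ m, n = 2 * k + m := ⟨n - 2 * k, by omega⟩
      rw [Derivation.leibniz, derivative_pow, derivative_pow, hh]
      simp only [smul_eq_mul]
      rw [show 2 * k + m - 2 * k = m by omega, show 2 * k + m + 1 - 2 * k = m + 1 by omega,
        show 2 * k + m + 1 - 2 * (k + 1) = m - 1 by omega, show k + 1 - 1 = k by omega]
      ring
    · rw [if_neg hs, if_neg hs, map_zero]

theorem simsun_count_eq_euler (n : ℕ) :
    Nat.card {π : Equiv.Perm (Fin n) // IsSimsun π} =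
      Nat.card {π : Equiv.Perm (Fin (n + 1)) // IsUpDown π} := by
  classical
  obtain ⟨h, h1, h2, h3⟩ := ss_up_ode
  have two : (2 : PowerSeries ℂ) ≠ 0 := by
    intro h
    have := congrArg PowerSeries.constantCoeff h
    simp only [map_ofNat, map_zero] at this
    norm_num at this
  have hh : PowerSeries.derivative ℂ (PowerSeries.derivative ℂ h) =
      h * PowerSeries.derivative ℂ h := by
    have := congrArg (PowerSeries.derivative ℂ) h3
    rw [← Nat.cast_two, ← nsmul_eq_mul, map_nsmul, map_add, PowerSeries.derivative_one,
      PowerSeries.derivative_pow, nsmul_eq_mul] at this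
    apply mul_left_cancel₀ two
    push_cast at this
    linear_combination this
  have hc : PowerSeries.constantCoeff (PowerSeries.derivative ℂ h) = 1 := by
    have := congrArg PowerSeries.constantCoeff h3
    simp only [map_mul, map_add, map_pow, h2, map_one, map_ofNat] at this
    linear_combination this / 2
  have key := h1 (n + 1) (by omega)
  rw [ss_iter h hh n, map_sum] at key
  have : ∀ π : Equiv.Perm (Fin n), PowerSeries.constantCoeff (if IsSimsun π then
      (PowerSeries.derivative ℂ h) ^ ((ssD π).card + 1) * h ^ (n - 2 * (ssD π).card) else 0) =
      if IsSimsun π then (1 : ℂ) else 0 := by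
    intro π
    split_ifs
    · simp [h2, hc]
    · simp
  simp only [this] at key
  rw [Finset.sum_boole] at key
  rw [Nat.card_eq_fintype_card, Fintype.card_subtype]
  exact_mod_cast key
end

section
/- For every n ≥ 4, the number of simsun permutations of {1,…,n} that avoid the pattern 123 equals 6. -/
/-- `π` contains the pattern 123. -/
def Contains123 {n : ℕ} (π : Equiv.Perm (Fin n)) : Prop :=
  ∃ a b c : Fin n, a < b ∧ b < c ∧ π a < π b ∧ π b < π c


/-- Insert the new maximum at position `p`. -/
def insMax {n : ℕ} (p : Fin (n+1)) (σ : Equiv.Perm (Fin n)) : Equiv.Perm (Fin (n+1)) :=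
  ((finSuccEquiv' p).trans (Equiv.optionCongr σ)).trans (finSuccEquiv' (Fin.last n)).symm

lemma insMax_self {n : ℕ} (p : Fin (n+1)) (σ : Equiv.Perm (Fin n)) :
    insMax p σ p = Fin.last n := by
  simp [insMax]

lemma insMax_succAbove {n : ℕ} (p : Fin (n+1)) (σ : Equiv.Perm (Fin n)) (i : Fin n) :
    insMax p σ (p.succAbove i) = (σ i).castSucc := by
  simp [insMax]

lemma insMax_lt {n : ℕ} (p : Fin (n+1)) (σ : Equiv.Perm (Fin n)) (i : ℕ) (h : i < (p : ℕ)) :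
    (insMax p σ ⟨i, by omega⟩ : ℕ) = σ ⟨i, by omega⟩ := by
  have h2 := insMax_succAbove p σ ⟨i, by omega⟩
  rw [Fin.succAbove_of_castSucc_lt _ _ (by simpa [Fin.lt_def] using h)] at h2
  simpa using congrArg Fin.val h2

lemma insMax_gt {n : ℕ} (p : Fin (n+1)) (σ : Equiv.Perm (Fin n)) (i : ℕ) (h : (p : ℕ) ≤ i)
    (hi : i < n) :
    (insMax p σ ⟨i+1, by omega⟩ : ℕ) = σ ⟨i, hi⟩ := by
  have h2 := insMax_succAbove p σ ⟨i, by omega⟩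
  rw [Fin.succAbove_of_le_castSucc _ _ (by simpa [Fin.le_def] using h)] at h2
  simpa using congrArg Fin.val h2

lemma insMax_surj {n : ℕ} (π : Equiv.Perm (Fin (n+1))) : ∃ p σ, π = insMax p σ := by
  set p := π.symm (Fin.last n) with hp
  let e : Option (Fin n) ≃ Option (Fin n) :=
    ((finSuccEquiv' p).symm.trans π).trans (finSuccEquiv' (Fin.last n))
  have he : e none = none := by simp [e, hp]
  refine ⟨p, Equiv.removeNone e, ?_⟩
  have h3 : Equiv.optionCongr (Equiv.removeNone e) = e := by
    ext1 x
    rcases x with _ | x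
    · simp [he]
    · simp only [Equiv.optionCongr_apply, Option.map_some]
      apply Equiv.removeNone_some
      apply Option.ne_none_iff_exists'.mp
      intro h
      have := e.injective (h.trans he.symm)
      simp at this
  unfold insMax
  rw [h3]
  ext x
  simp [e]

lemma insMax_inj {n : ℕ} (p q : Fin (n+1)) (σ τ : Equiv.Perm (Fin n))
    (h : insMax p σ = insMax q τ) : σ = τ := by
  have hpq : p = q := by
    apply (insMax p σ).injective
    rw [insMax_self, h, insMax_self]
  subst hpq
  ext i
  have := insMax_succAbove p σ i
  rw [h, insMax_succAbove] at this
  simpa using (congrArg Fin.val this).symm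

lemma simsun_of_ins {n : ℕ} (p : Fin (n+1)) (σ : Equiv.Perm (Fin n))
    (h : IsSimsun (insMax p σ)) : IsSimsun σ := by
  rintro k ⟨a, b, c, hab, hbc, ha, hb, hc, h1, h2, h3, h4⟩
  refine h (min k n) ⟨p.succAbove a, p.succAbove b, p.succAbove c, ?_, ?_, ?_, ?_, ?_, ?_, ?_, ?_, ?_⟩
  · simpa using hab
  · simpa using hbc
  · simpa [insMax_succAbove] using ha
  · simpa [insMax_succAbove] using hb
  · simpa [insMax_succAbove] using hc
  · intro m hm1 hm2
    rcases Fin.eq_self_or_eq_succAbove p m with rfl | ⟨j, rfl⟩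
    · simp [insMax_self]
    · have := h1 j (by simpa using hm1) (by simpa using hm2)
      simp [insMax_succAbove, this]
  · intro m hm1 hm2
    rcases Fin.eq_self_or_eq_succAbove p m with rfl | ⟨j, rfl⟩
    · simp [insMax_self]
    · have := h2 j (by simpa using hm1) (by simpa using hm2)
      simp [insMax_succAbove, this]
  · simpa [insMax_succAbove] using h3
  · simpa [insMax_succAbove] using h4

lemma c123_ins {n : ℕ} (p : Fin (n+1)) (σ : Equiv.Perm (Fin n))
    (h : Contains123 σ) : Contains123 (insMax p σ) := by
  obtain ⟨a, b, c, h1, h2, h3, h4⟩ := h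
  exact ⟨p.succAbove a, p.succAbove b, p.succAbove c, by simpa using h1, by simpa using h2,
    by simpa [insMax_succAbove] using h3, by simpa [insMax_succAbove] using h4⟩

lemma simsun_ins {n : ℕ} (p : Fin (n+1)) (σ : Equiv.Perm (Fin n)) (hσ : IsSimsun σ)
    (h : ∀ i : ℕ, (hi : i + 2 < n + 1) →
      ¬ ((insMax p σ ⟨i+2, hi⟩ : ℕ) < insMax p σ ⟨i+1, by omega⟩ ∧
        (insMax p σ ⟨i+1, by omega⟩ : ℕ) < insMax p σ ⟨i, by omega⟩)) :
    IsSimsun (insMax p σ) := by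
  rintro k ⟨a, b, c, hab, hbc, ha, hb, hc, h1, h2, h3, h4⟩
  by_cases hk : k ≤ n
  · have key : ∀ x, (insMax p σ x : ℕ) < k → ∃ j, x = p.succAbove j := by
      intro x hx
      rcases Fin.eq_self_or_eq_succAbove p x with rfl | ⟨j, rfl⟩
      · simp [insMax_self] at hx; omega
      · exact ⟨j, rfl⟩
    obtain ⟨a, rfl⟩ := key a ha
    obtain ⟨b, rfl⟩ := key b hb
    obtain ⟨c, rfl⟩ := key c hc
    simp only [insMax_succAbove, Fin.val_castSucc, Fin.succAbove_lt_succAbove_iff] at *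
    refine hσ k ⟨a, b, c, hab, hbc, ha, hb, hc, ?_, ?_, h3, h4⟩
    · intro m hm1 hm2
      have := h1 (p.succAbove m) (by simpa using hm1) (by simpa using hm2)
      simpa [insMax_succAbove] using this
    · intro m hm1 hm2
      have := h2 (p.succAbove m) (by simpa using hm1) (by simpa using hm2)
      simpa [insMax_succAbove] using this
  · obtain ⟨a, ha'⟩ := a
    obtain ⟨b, hb'⟩ := b
    obtain ⟨c, hc'⟩ := c
    simp only [Fin.mk_lt_mk] at hab hbc
    have e1 : b = a + 1 := by
      by_contra hne
      have := h1 ⟨a+1, by omega⟩ (by simp) (by simp only [Fin.mk_lt_mk]; omega)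
      omega
    subst e1
    have e2 : c = a + 2 := by
      by_contra hne
      have := h2 ⟨a+2, by omega⟩ (by simp) (by simp only [Fin.mk_lt_mk]; omega)
      omega
    subst e2
    exact h a hc' ⟨h3, h4⟩

lemma no_dd {n : ℕ} (σ : Equiv.Perm (Fin n)) (hσ : IsSimsun σ) (i : ℕ) (hi : i + 2 < n) :
    ¬ ((σ ⟨i+2, hi⟩ : ℕ) < σ ⟨i+1, by omega⟩ ∧ (σ ⟨i+1, by omega⟩ : ℕ) < σ ⟨i, by omega⟩) := by
  rintro ⟨h1, h2⟩
  refine hσ n ⟨⟨i, by omega⟩, ⟨i+1, by omega⟩, ⟨i+2, hi⟩, by simp, by simp, by omega, by omega,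
    by omega, ?_, ?_, h1, h2⟩
  · intro m hm1 hm2
    simp only [Fin.lt_def] at hm1 hm2
    omega
  · intro m hm1 hm2
    simp only [Fin.lt_def] at hm1 hm2
    omega

lemma no_123 {n : ℕ} (σ : Equiv.Perm (Fin n)) (hσ : ¬ Contains123 σ) (a b c : ℕ)
    (hab : a < b) (hbc : b < c) (hi : c < n) :
    ¬ ((σ ⟨a, by omega⟩ : ℕ) < σ ⟨b, by omega⟩ ∧ (σ ⟨b, by omega⟩ : ℕ) < σ ⟨c, hi⟩) := by
  rintro ⟨h1, h2⟩
  exact hσ ⟨_, _, _, by simpa using hab, by simpa using hbc, h1, h2⟩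

lemma val_ne {n : ℕ} (σ : Equiv.Perm (Fin n)) (a b : ℕ) (hab : a < b) (hb : b < n) :
    (σ ⟨a, by omega⟩ : ℕ) ≠ σ ⟨b, hb⟩ := by
  intro h
  have := σ.injective (Fin.ext h)
  simp at this
  omega

/-- The forced insertion position. -/
def posMax {n : ℕ} (hn : 4 ≤ n) (σ : Equiv.Perm (Fin n)) : Fin (n+1) :=
  if (σ ⟨0, by omega⟩ : ℕ) < σ ⟨1, by omega⟩ then ⟨0, by omega⟩ else ⟨1, by omega⟩

lemma pos_forced {n : ℕ} (hn : 4 ≤ n) (p : Fin (n+1)) (σ : Equiv.Perm (Fin n))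
    (h1 : IsSimsun (insMax p σ)) (h2 : ¬ Contains123 (insMax p σ)) : p = posMax hn σ := by
  have g1 := simsun_of_ins p σ h1
  have g2 : ¬ Contains123 σ := fun h => h2 (c123_ins p σ h)
  obtain ⟨p, hp⟩ := p
  have hself : (insMax ⟨p, hp⟩ σ ⟨p, hp⟩ : ℕ) = n := by rw [insMax_self]; simp
  have n01 := val_ne σ 0 1 (by omega) (by omega)
  have n12 := val_ne σ 1 2 (by omega) (by omega)
  have n23 := val_ne σ 2 3 (by omega) (by omega)
  have d0 := no_dd σ g1 0 (by omega)
  have t0 := no_123 σ g2 0 1 2 (by omega) (by omega) (by omega)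
  have t1 := no_123 σ g2 1 2 3 (by omega) (by omega) (by omega)
  have b0 := (σ ⟨0, by omega⟩).isLt
  have b1 := (σ ⟨1, by omega⟩).isLt
  have b2 := (σ ⟨2, by omega⟩).isLt
  unfold posMax
  split_ifs with hlt
  · by_contra hne
    have hp0 : p ≠ 0 := fun h => hne (by simp [h])
    by_cases hp1 : p = 1
    · subst hp1
      have := no_dd _ h1 1 (by omega)
      have e1 := insMax_gt ⟨1, hp⟩ σ 1 (by simp) (by omega)
      have e2 := insMax_gt ⟨1, hp⟩ σ 2 (by simp) (by omega)
      simp only [Nat.reduceAdd, zero_add] at *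
      omega
    · have := no_123 _ h2 0 1 p (by omega) (by omega) hp
      have e1 := insMax_lt ⟨p, hp⟩ σ 0 (by simp only; omega)
      have e2 := insMax_lt ⟨p, hp⟩ σ 1 (by simp only; omega)
      omega
  · by_contra hne
    have hp0 : p ≠ 1 := fun h => hne (by simp [h])
    by_cases hp1 : p = 0
    · subst hp1
      have := no_dd _ h1 0 (by omega)
      have e1 := insMax_gt ⟨0, hp⟩ σ 0 (by simp) (by omega)
      have e2 := insMax_gt ⟨0, hp⟩ σ 1 (by simp) (by omega)
      simp only [Nat.reduceAdd, zero_add] at *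
      omega
    · by_cases hp2 : p = 2
      · subst hp2
        have := no_dd _ h1 2 (by omega)
        have e1 := insMax_gt ⟨2, hp⟩ σ 2 (by simp) (by omega)
        have e2 := insMax_gt ⟨2, hp⟩ σ 3 (by simp) (by omega)
        simp only [Nat.reduceAdd, zero_add] at *
        omega
      · have := no_123 _ h2 1 2 p (by omega) (by omega) hp
        have e1 := insMax_lt ⟨p, hp⟩ σ 1 (by simp only; omega)
        have e2 := insMax_lt ⟨p, hp⟩ σ 2 (by simp only; omega)
        simp only [Nat.reduceAdd, zero_add] at *
        omega

lemma good_ins {n : ℕ} (hn : 4 ≤ n) (σ : Equiv.Perm (Fin n))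
    (h1 : IsSimsun σ) (h2 : ¬ Contains123 σ) :
    IsSimsun (insMax (posMax hn σ) σ) ∧ ¬ Contains123 (insMax (posMax hn σ) σ) := by
  have hp1 : (posMax hn σ : ℕ) ≤ 1 := by unfold posMax; split_ifs <;> simp
  constructor
  · apply simsun_ins _ _ h1
    rintro i hi ⟨hd1, hd2⟩
    by_cases hpi : (posMax hn σ : ℕ) < i
    · obtain ⟨i, rfl⟩ : ∃ j, i = j + 1 := ⟨i - 1, by omega⟩
      have e0 := insMax_gt (posMax hn σ) σ i (by omega) (by omega)
      have e1 := insMax_gt (posMax hn σ) σ (i+1) (by omega) (by omega)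
      have e2 := insMax_gt (posMax hn σ) σ (i+2) (by omega) (by omega)
      have := no_dd σ h1 i (by omega)
      simp only [add_assoc, Nat.reduceAdd] at *
      omega
    · have d0 := no_dd σ h1 0 (by omega)
      have n01 := val_ne σ 0 1 (by omega) (by omega)
      have n12 := val_ne σ 1 2 (by omega) (by omega)
      have b0 := (σ ⟨0, by omega⟩).isLt
      by_cases hlt : (σ ⟨0, by omega⟩ : ℕ) < σ ⟨1, by omega⟩
      · have hpos : posMax hn σ = ⟨0, by omega⟩ := by simp [posMax, hlt]
        rw [hpos] at hd1 hd2 hpi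
        obtain rfl : i = 0 := by simp only at hpi; omega
        have e1 := insMax_gt ⟨0, by omega⟩ σ 0 (by simp) (by omega)
        have e2 := insMax_gt ⟨0, by omega⟩ σ 1 (by simp) (by omega)
        simp only [Nat.reduceAdd, zero_add] at *
        omega
      · have hpos : posMax hn σ = ⟨1, by omega⟩ := by simp only [posMax, hlt, if_false]
        rw [hpos] at hd1 hd2 hpi
        have hself : (insMax ⟨1, by omega⟩ σ ⟨1, by omega⟩ : ℕ) = n := by rw [insMax_self]; simp
        have e0 := insMax_lt ⟨1, by omega⟩ σ 0 (by simp)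
        have e1 := insMax_gt ⟨1, by omega⟩ σ 1 (by simp) (by omega)
        have e2 := insMax_gt ⟨1, by omega⟩ σ 2 (by simp) (by omega)
        have hi2 : i = 0 ∨ i = 1 := by simp only at hpi; omega
        rcases hi2 with rfl | rfl
        · simp only [Nat.reduceAdd, zero_add] at *
          omega
        · simp only [Nat.reduceAdd, zero_add] at *
          omega
  · rintro ⟨a, b, c, hab, hbc, h3, h4⟩
    rcases Fin.eq_self_or_eq_succAbove (posMax hn σ) a with ha | ⟨a, rfl⟩
    · rw [ha, insMax_self] at h3
      exact absurd (Fin.le_last _) (not_le.mpr h3)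
    rcases Fin.eq_self_or_eq_succAbove (posMax hn σ) b with hb | ⟨b, rfl⟩
    · rw [hb, insMax_self] at h4
      exact absurd (Fin.le_last _) (not_le.mpr h4)
    rcases Fin.eq_self_or_eq_succAbove (posMax hn σ) c with hc | ⟨c, rfl⟩
    · rw [hc] at hbc
      simp only [Fin.lt_def] at hab hbc
      omega
    simp only [insMax_succAbove, Fin.castSucc_lt_castSucc_iff, Fin.succAbove_lt_succAbove_iff] at *
    exact h2 ⟨a, b, c, hab, hbc, h3, h4⟩

lemma card_step (n : ℕ) (hn : 4 ≤ n) :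
    Nat.card {π : Equiv.Perm (Fin n) // IsSimsun π ∧ ¬ Contains123 π} =
    Nat.card {π : Equiv.Perm (Fin (n+1)) // IsSimsun π ∧ ¬ Contains123 π} := by
  let f : {π : Equiv.Perm (Fin n) // IsSimsun π ∧ ¬ Contains123 π} →
      {π : Equiv.Perm (Fin (n+1)) // IsSimsun π ∧ ¬ Contains123 π} :=
    fun σ => ⟨insMax (posMax hn σ.1) σ.1, good_ins hn σ.1 σ.2.1 σ.2.2⟩
  apply Nat.card_congr (Equiv.ofBijective f ⟨?_, ?_⟩)
  · intro σ τ h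
    exact Subtype.ext (insMax_inj _ _ _ _ (congrArg Subtype.val h))
  · rintro ⟨π, h1, h2⟩
    obtain ⟨p, σ, rfl⟩ := insMax_surj π
    refine ⟨⟨σ, simsun_of_ins p σ h1, fun h => h2 (c123_ins p σ h)⟩, ?_⟩
    apply Subtype.ext
    simp only [f]
    rw [← pos_forced hn p σ h1 h2]

lemma simsun4 (π : Equiv.Perm (Fin 4)) : IsSimsun π ↔
    ∀ k : Fin 5, ¬ ∃ a b c : Fin 4, a < b ∧ b < c ∧
    (π a : ℕ) < k ∧ (π b : ℕ) < k ∧ (π c : ℕ) < k ∧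
    (∀ m : Fin 4, a < m → m < b → (k : ℕ) ≤ (π m : ℕ)) ∧
    (∀ m : Fin 4, b < m → m < c → (k : ℕ) ≤ (π m : ℕ)) ∧
    (π c : ℕ) < (π b : ℕ) ∧ (π b : ℕ) < (π a : ℕ) := by
  constructor
  · intro h k
    exact h k
  · rintro h k ⟨a, b, c, hab, hbc, ha, hb, hc, h1, h2, h3, h4⟩
    exact h ⟨min k 4, by omega⟩ ⟨a, b, c, hab, hbc, by simp only; omega, by simp only; omega,
      by simp only; omega, fun m u v => by have := h1 m u v; simp only; omega,
      fun m u v => by have := h2 m u v; simp only; omega, h3, h4⟩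

lemma card_base :
    Nat.card {π : Equiv.Perm (Fin 4) // IsSimsun π ∧ ¬ Contains123 π} = 6 := by
  simp only [simsun4, Contains123]
  rw [Nat.card_eq_fintype_card]
  decide +kernel

/-- For `n ≥ 4`, there are exactly `6` simsun permutations of `{1, …, n}`
avoiding the pattern 123. -/
theorem simsun_avoid123_count (n : ℕ) (hn : 4 ≤ n) :
    Nat.card {π : Equiv.Perm (Fin n) // IsSimsun π ∧ ¬ Contains123 π} = 6 := by
  induction n, hn using Nat.le_induction with
  | base => exact card_base
  | succ m hm ih => rw [← card_step m hm, ih]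
end

section
/- For every n ≥ 0, the number of simsun permutations of {1,…,n} that avoid the pattern 132 equals the secondary structure number S_n. -/
/-- `π` contains the pattern 132. -/
def Contains132 {n : ℕ} (π : Equiv.Perm (Fin n)) : Prop :=
  ∃ a b c : Fin n, a < b ∧ b < c ∧ π a < π c ∧ π c < π b

/-- The secondary structure numbers: `S 0 = S 1 = 1` and, for `n ≥ 2`,
`S n = S (n-1) + S (n-2) + ∑_{k=0}^{n-3} S k * S (n-3-k)`
(the sum being empty for `n = 2`). -/
def secStruct : ℕ → ℕ
  | 0 => 1
  | 1 => 1
  | n + 2 => secStruct (n + 1) + secStruct n +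
      ∑ k ∈ (Finset.range n).attach, secStruct k * secStruct (n - 1 - k)
decreasing_by
  all_goals first
    | omega
    | (have := Finset.mem_range.mp k.2; omega)


namespace SimsunAux

/-- no double descent -/
def ndd : List ℕ → Prop
  | a :: b :: c :: t => ¬ (b < a ∧ c < b) ∧ ndd (b :: c :: t)
  | _ => True

/-- starts with a descent -/
def sd : List ℕ → Prop
  | a :: b :: _ => b < a
  | _ => False

/-- ends with a descent -/
def ed : List ℕ → Prop
  | [a, b] => b < a
  | _ :: b :: c :: t => ed (b :: c :: t)
  | _ => False

lemma ndd_cons (a : ℕ) (v : List ℕ) :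
    ndd (a :: v) ↔ ndd v ∧ ∀ b c t, v = b :: c :: t → ¬ (b < a ∧ c < b) := by
  rcases v with _ | ⟨b, _ | ⟨c, t⟩⟩
  · simp [ndd]
  · simp [ndd]
  · simp only [ndd]
    constructor
    · rintro ⟨h1, h2⟩
      refine ⟨h2, ?_⟩
      rintro b' c' t' h
      simp only [List.cons.injEq] at h
      obtain ⟨rfl, rfl, rfl⟩ := h
      exact h1
    · rintro ⟨h1, h2⟩
      exact ⟨h2 b c t rfl, h1⟩

lemma ndd_top (m : ℕ) (u v : List ℕ) (hu : ∀ x ∈ u, x < m) (hv : ∀ x ∈ v, x < m) :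
    ndd (u ++ m :: v) ↔ ndd u ∧ ndd v ∧ ¬ sd v := by
  induction u with
  | nil =>
    rcases v with _ | ⟨b, _ | ⟨c, t⟩⟩
    · simp [ndd, sd]
    · simp [ndd, sd]
    · have := hv b (by simp)
      simp [ndd, sd]; tauto
  | cons a u ih =>
    have ih := ih (fun x hx => hu x (by simp [hx]))
    rcases u with _ | ⟨b, _ | ⟨c, t⟩⟩
    · have := hu a (by simp)
      rcases v with _ | ⟨b, t⟩
      · simp [ndd, sd]
      · simp only [List.nil_append, List.cons_append, ndd] at ih ⊢
        rw [ih]; simp; omega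
    · have := hu b (by simp)
      simp only [List.nil_append, List.cons_append, ndd] at ih ⊢
      rw [ih]; simp; omega
    · simp only [List.cons_append, ndd] at ih ⊢
      rw [ih]; tauto

lemma ndd_app (u v : List ℕ) (huv : ∀ x ∈ u, ∀ y ∈ v, y < x) (hu : u ≠ []) (hv : v ≠ []) :
    ndd (u ++ v) ↔ ndd u ∧ ndd v ∧ ¬ ed u ∧ ¬ sd v := by
  induction u with
  | nil => simp at hu
  | cons a u ih =>
    have ih := ih (fun x hx => huv x (by simp [hx]))
    rcases u with _ | ⟨b, _ | ⟨c, t⟩⟩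
    · rcases v with _ | ⟨b, _ | ⟨c, t⟩⟩
      · simp at hv
      · simp [ndd, sd, ed]
      · have := huv a (by simp) b (by simp)
        simp [ndd, sd, ed]; tauto
    · rcases v with _ | ⟨c, t⟩
      · simp at hv
      · have := huv b (by simp) c (by simp)
        have ih := ih (by simp)
        simp only [List.nil_append, List.cons_append, ndd, ed] at ih ⊢
        rw [ih]; tauto
    · have ih := ih (by simp)
      simp only [List.cons_append, ndd, ed] at ih ⊢
      rw [ih]; tauto

lemma ed_app_two (u : List ℕ) (a b : ℕ) (t : List ℕ) :
    ed (u ++ a :: b :: t) ↔ ed (a :: b :: t) := by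
  induction u with
  | nil => simp
  | cons x u ih =>
    rcases u with _ | ⟨y, _ | ⟨z, u⟩⟩ <;> simp_all [ed]

lemma ed_app (u v : List ℕ) (hv : 2 ≤ v.length) : ed (u ++ v) ↔ ed v := by
  rcases v with _ | ⟨b, _ | ⟨c, t⟩⟩
  · simp at hv
  · simp at hv
  · exact ed_app_two u b c t

lemma ed_app_one (u : List ℕ) (b : ℕ) (hu : u ≠ []) (h : ∀ x ∈ u, b < x) : ed (u ++ [b]) := by
  rcases List.eq_nil_or_concat u with rfl | ⟨w, x, rfl⟩
  · simp at hu
  · have := h x (by simp)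
    simp only [List.append_assoc, List.cons_append, List.nil_append, List.concat_eq_append]
    rw [ed_app_two]
    exact this

lemma ed_last_top (u : List ℕ) (m : ℕ) (h : ∀ x ∈ u, x < m) : ¬ ed (u ++ [m]) := by
  rcases List.eq_nil_or_concat u with rfl | ⟨w, x, rfl⟩
  · simp [ed]
  · have := h x (by simp)
    simp only [List.append_assoc, List.cons_append, List.nil_append, List.concat_eq_append]
    rw [ed_app_two]
    simp [ed]; omega

lemma sd_top (m : ℕ) (u v : List ℕ) (hu : ∀ x ∈ u, x < m) (hv : ∀ x ∈ v, x < m) :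
    sd (u ++ m :: v) ↔ (u = [] ∧ v ≠ []) ∨ sd u := by
  rcases u with _ | ⟨a, _ | ⟨b, t⟩⟩
  · rcases v with _ | ⟨b, t⟩
    · simp [sd]
    · have := hv b (by simp)
      simpa [sd] using this
  · have := hu a (by simp)
    simp [sd]; omega
  · simp [sd]

lemma ndd_map (k : ℕ) (u : List ℕ) : ndd (u.map (· + k)) ↔ ndd u := by
  induction u with
  | nil => simp
  | cons a u ih =>
    rcases u with _ | ⟨b, _ | ⟨c, t⟩⟩
    · simp [ndd]
    · simp [ndd]
    · simp only [List.map, ndd] at ih ⊢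
      rw [ih]; simp

lemma ed_map (k : ℕ) (u : List ℕ) : ed (u.map (· + k)) ↔ ed u := by
  induction u with
  | nil => simp
  | cons a u ih =>
    rcases u with _ | ⟨b, _ | ⟨c, t⟩⟩
    · simp [ed]
    · simp [ed]
    · simpa only [List.map, ed] using ih

lemma sd_map (k : ℕ) (u : List ℕ) : sd (u.map (· + k)) ↔ sd u := by
  rcases u with _ | ⟨b, _ | ⟨c, t⟩⟩ <;> simp [sd]

/-- the 132-avoiding word of a tree -/
def word : BinaryTree Unit → List ℕ
  | .nil => []
  | .node _ l r => (word l).map (· + (word r).length) ++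
      ((word l).length + (word r).length) :: word r

lemma word_length (t : BinaryTree Unit) : (word t).length = t.numNodes := by
  induction t with
  | nil => simp [word]
  | node _ l r hl hr => simp [word, BinaryTree.numNodes, hl, hr]; omega

lemma word_lt (t : BinaryTree Unit) : ∀ x ∈ word t, x < (word t).length := by
  induction t with
  | nil => simp [word]
  | node _ l r hl hr =>
    intro x hx
    simp only [word, List.mem_append, List.mem_map, List.mem_cons, List.length_append,
      List.length_map, List.length_cons] at hx ⊢
    rcases hx with ⟨y, hy, rfl⟩ | rfl | hx
    · have := hl y hy; omega
    · omega
    · have := hr x hx; omega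

/-- restriction to the `k` smallest letters -/
def rst (k : ℕ) (w : List ℕ) : List ℕ := w.filter (fun x => x < k)

lemma rst_all (k : ℕ) (w : List ℕ) (h : ∀ x ∈ w, x < k) : rst k w = w := by
  simpa [rst] using h

lemma rst_low (l r : BinaryTree Unit) (k : ℕ) (hk : k ≤ (word r).length) :
    rst k (word (.node () l r)) = rst k (word r) := by
  simp only [word, rst, List.filter_append, List.filter_cons]
  rw [if_neg (by simp; omega), List.filter_eq_nil_iff.2, List.nil_append]
  simp; intros; omega

lemma rst_mid (l r : BinaryTree Unit) (k : ℕ) (hk : k ≤ (word l).length) :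
    rst (k + (word r).length) (word (.node () l r)) =
      (rst k (word l)).map (· + (word r).length) ++ word r := by
  simp only [word, rst, List.filter_append, List.filter_cons]
  rw [if_neg (by simp; omega), List.filter_map]
  congr 1
  · congr 2; ext x; simp
  · apply rst_all
    intro x hx
    have := word_lt r x hx
    omega

lemma rst_cases (l r : BinaryTree Unit) (P : List ℕ → Prop) :
    (∀ k, P (rst k (word (.node () l r)))) ↔
      (∀ k, P (rst k (word r))) ∧
      (∀ k, P ((rst k (word l)).map (· + (word r).length) ++ word r)) ∧
      P (word (.node () l r)) := by
  have red : ∀ (t : BinaryTree Unit) (k : ℕ), (word t).length ≤ k →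
      rst k (word t) = word t := fun t k hk =>
    rst_all _ _ (fun x hx => lt_of_lt_of_le (word_lt t x hx) hk)
  constructor
  · intro h
    refine ⟨fun k => ?_, fun k => ?_, ?_⟩
    · rcases le_total k (word r).length with hk | hk
      · rw [← rst_low l r k hk]; exact h k
      · have := h (word r).length
        rw [rst_low l r _ le_rfl, red r _ le_rfl] at this
        rwa [red r k hk]
    · rcases le_total k (word l).length with hk | hk
      · rw [← rst_mid l r k hk]; exact h _
      · have := h ((word l).length + (word r).length)
        rw [rst_mid l r _ le_rfl, red l _ le_rfl] at this
        rwa [red l k hk]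
    · have := h (word (.node () l r)).length
      rwa [red _ _ le_rfl] at this
  · rintro ⟨h1, h2, h3⟩ k
    rcases le_total k (word r).length with hk | hk
    · rw [rst_low l r k hk]; exact h1 k
    · rcases le_total k ((word l).length + (word r).length) with hk2 | hk2
      · obtain ⟨j, rfl⟩ := Nat.exists_eq_add_of_le' hk
        rw [rst_mid l r j (by omega)]; exact h2 j
      · rcases Nat.eq_or_lt_of_le hk2 with rfl | hk3
        · rw [rst_mid l r _ le_rfl]; exact h2 _
        · rw [red]
          · exact h3
          · simp [word]; omega

def PA (t : BinaryTree Unit) : Prop := ∀ k, ndd (rst k (word t))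
def NE (t : BinaryTree Unit) : Prop := ∀ k, ¬ ed (rst k (word t))
def NS (t : BinaryTree Unit) : Prop := ¬ sd (word t)

lemma word_nil_iff (t : BinaryTree Unit) : word t = [] ↔ t = .nil := by
  cases t <;> simp [word]

lemma rst_self (t : BinaryTree Unit) : rst (word t).length (word t) = word t :=
  rst_all _ _ (word_lt t)

lemma PA.word {t : BinaryTree Unit} (h : PA t) : ndd (word t) := by
  have := h (SimsunAux.word t).length
  rwa [rst_self] at this

lemma top_lt (l r : BinaryTree Unit) : (∀ x ∈ (word l).map (· + (word r).length),
    x < (word l).length + (word r).length) ∧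
    ∀ x ∈ word r, x < (word l).length + (word r).length := by
  constructor
  · intro x hx
    obtain ⟨y, hy, rfl⟩ := List.mem_map.1 hx
    have := word_lt l y hy
    simp; omega
  · intro x hx
    have := word_lt r x hx
    omega

lemma mid_lt (u : List ℕ) (r : BinaryTree Unit) : ∀ x ∈ u.map (· + (word r).length),
    ∀ y ∈ word r, y < x := by
  intro x hx y hy
  obtain ⟨z, hz, rfl⟩ := List.mem_map.1 hx
  have := word_lt r y hy
  simp; omega

lemma PA_node (l r : BinaryTree Unit) :
    PA (.node () l r) ↔ PA l ∧ PA r ∧ (r ≠ .nil → NE l ∧ NS r) := by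
  unfold PA
  rw [rst_cases, SimsunAux.word, ndd_top _ _ _ (top_lt l r).1 (top_lt l r).2, ndd_map]
  by_cases hr : r = .nil
  · subst hr
    simp only [SimsunAux.word, List.append_nil, ndd_map, sd]
    have : PA l → ndd (word l) := PA.word
    simp [PA] at this
    simp; tauto
  · have hr' := (word_nil_iff r).not.2 hr
    simp only [hr, ne_eq, not_false_eq_true, forall_const]
    constructor
    · rintro ⟨h1, h2, h3, h4, h5⟩
      refine ⟨fun k => ?_, h1, fun k => ?_, h5⟩
      all_goals
        by_cases hl : rst k (word l) = []
        · simp [hl, ndd, ed]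
        · have := h2 k
          rw [ndd_app _ _ (mid_lt _ r) (by simpa using hl) hr', ndd_map, ed_map] at this
          tauto
    · rintro ⟨h1, h2, h3, h4⟩
      refine ⟨h2, fun k => ?_, PA.word h1, PA.word h2, h4⟩
      by_cases hl : rst k (word l) = []
      · simp [hl]; exact PA.word h2
      · rw [ndd_app _ _ (mid_lt _ r) (by simpa using hl) hr', ndd_map, ed_map]
        exact ⟨h1 k, PA.word h2, h3 k, h4⟩

lemma NE_node (l r : BinaryTree Unit) (h : r = .nil ∨ NE l) :
    NE (.node () l r) ↔ (r = .nil ∧ NE l) ∨ (2 ≤ r.numNodes ∧ NE r) := by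
  have hlen := word_length r
  unfold NE
  rw [rst_cases l r (fun w => ¬ ed w), SimsunAux.word]
  by_cases hr : r = .nil
  · subst hr
    have := ed_last_top _ _ (top_lt l .nil).1
    simp only [SimsunAux.word, List.append_nil, ed_map, rst, List.length_nil] at this ⊢
    simp [ed, BinaryTree.numNodes] at this ⊢
    exact fun _ => this
  · have hr' := (word_nil_iff r).not.2 hr
    by_cases h2 : 2 ≤ r.numNodes
    · simp only [hr, h2, true_and, false_and, false_or]
      constructor
      · exact fun h => h.1
      · intro h
        have hw : ¬ ed (word r) := by
          have := h (word r).length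
          rwa [rst_self] at this
        refine ⟨h, fun k => ?_, ?_⟩
        · rwa [ed_app _ _ (by omega)]
        · rw [List.append_cons, ed_app _ _ (by omega)]
          exact hw
    · simp only [hr, h2, false_and, or_self, iff_false]
      rintro ⟨-, -, h3⟩
      have : (word r).length = 1 := by
        have := List.length_pos_iff.2 hr'
        omega
      obtain ⟨b, hb⟩ := List.length_eq_one_iff.1 this
      apply h3
      have hb0 : b ∈ word r := by simp [hb]
      have hb1 := (top_lt l r).2 b hb0
      rw [hb] at hb1 ⊢
      rw [ed_app_two]
      exact hb1

lemma NS_node (l r : BinaryTree Unit) :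
    NS (.node () l r) ↔ (l = .nil → r = .nil) ∧ NS l := by
  unfold NS
  rw [SimsunAux.word, sd_top _ _ _ (top_lt l r).1 (top_lt l r).2, sd_map]
  simp [word_nil_iff]

def PB (t : BinaryTree Unit) : Prop := PA t ∧ NE t
def PC (t : BinaryTree Unit) : Prop := PA t ∧ NS t
def PD (t : BinaryTree Unit) : Prop := PA t ∧ NE t ∧ NS t

lemma PA_nil : PA .nil := by intro k; simp [word, rst, ndd]
lemma NE_nil : NE .nil := by intro k; simp [word, rst, ed]
lemma NS_nil : NS .nil := by simp [NS, word, sd]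

lemma recA (l r : BinaryTree Unit) : PA (.node () l r) ↔
    (PA l ∧ r = .nil) ∨ (PB l ∧ (PC r ∧ r ≠ .nil)) := by
  rw [PA_node, PB, PC]
  by_cases hr : r = .nil
  · subst hr; simp [PA_nil]
  · simp [hr]; tauto

lemma nn (t : BinaryTree Unit) (h : 2 ≤ t.numNodes) : t ≠ .nil := by
  rintro rfl; simp [BinaryTree.numNodes] at h

lemma recB (l r : BinaryTree Unit) : PB (.node () l r) ↔
    (PB l ∧ r = .nil) ∨ (PB l ∧ (PD r ∧ 2 ≤ r.numNodes)) := by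
  rw [PB, PB, PD, PA_node]
  have h1 := NE_node l r
  have h2 := nn r
  have h3 := PA_nil
  by_cases hr : r = .nil
  · grind
  · grind

lemma recC (l r : BinaryTree Unit) : PC (.node () l r) ↔
    (PC l ∧ r = .nil) ∨ ((PD l ∧ l ≠ .nil) ∧ (PC r ∧ r ≠ .nil)) := by
  rw [PC, PC, PC, PD, PA_node, NS_node]
  have h3 := PA_nil
  by_cases hr : r = .nil
  · grind
  · grind

lemma recD (l r : BinaryTree Unit) : PD (.node () l r) ↔
    (PD l ∧ r = .nil) ∨ ((PD l ∧ l ≠ .nil) ∧ (PD r ∧ 2 ≤ r.numNodes)) := by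
  rw [PD, PD, PD, PA_node, NS_node]
  have h1 := NE_node l r
  have h2 := nn r
  have h3 := PA_nil
  by_cases hr : r = .nil
  · grind
  · grind

open Classical in
/-- generating function of a class of trees -/
noncomputable def gf (P : BinaryTree Unit → Prop) : PowerSeries ℤ :=
  PowerSeries.mk fun n => (((BinaryTree.treesOfNumNodesEq n).filter P).card : ℤ)

open Classical in
lemma gf_coeff (P : BinaryTree Unit → Prop) (n : ℕ) : PowerSeries.coeff n (gf P) =
    (((BinaryTree.treesOfNumNodesEq n).filter P).card : ℤ) := by
  simp [gf]

lemma gf_congr {P Q : BinaryTree Unit → Prop} (h : ∀ t, P t ↔ Q t) : gf P = gf Q := by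
  have : P = Q := by ext t; exact h t
  rw [this]

lemma gf_or (P Q : BinaryTree Unit → Prop) (h : ∀ t, P t → ¬ Q t) :
    gf (fun t => P t ∨ Q t) = gf P + gf Q := by
  classical
  ext n
  rw [map_add, gf_coeff, gf_coeff, gf_coeff, ← Nat.cast_add, ← Finset.card_union_of_disjoint]
  · congr 2
    ext t; simp; tauto
  · rw [Finset.disjoint_filter]
    intro t _ h1
    exact h t h1

lemma gf_nil : gf (fun t => t = .nil) = 1 := by
  classical
  ext n
  rw [gf_coeff, PowerSeries.coeff_one]
  rcases n with _ | n
  · simp [Finset.filter_singleton]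
  · have : ∀ t ∈ BinaryTree.treesOfNumNodesEq (n + 1), ¬ t = .nil := by
      intro t ht h
      subst h
      simp [BinaryTree.numNodes] at ht
    simpa [Finset.filter_eq_empty_iff, BinaryTree.mem_treesOfNumNodesEq] using this

lemma gf_node (P Q : BinaryTree Unit → Prop) :
    gf (fun t => ∃ l r, t = .node () l r ∧ P l ∧ Q r) = PowerSeries.X * (gf P * gf Q) := by
  classical
  ext n
  rw [gf_coeff]
  rcases n with _ | n
  · simp
  · rw [PowerSeries.coeff_succ_X_mul, PowerSeries.coeff_mul]
    simp only [gf_coeff]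
    rw [BinaryTree.treesOfNumNodesEq_succ, Finset.filter_biUnion, Finset.card_biUnion]
    · push_cast
      apply Finset.sum_congr rfl
      rintro ⟨i, j⟩ -
      rw [← Nat.cast_mul, ← Finset.card_product, Finset.filter_map, Finset.card_map,
        ← Finset.filter_product]
      congr 2
      ext ⟨a, b⟩
      simp only [Finset.mem_filter, Function.comp, Function.Embedding.coeFn_mk]
      simp
      intros
      change (∃ l r, BinaryTree.node () a b = BinaryTree.node () l r ∧ P l ∧ Q r) ↔ _
      simp
    · rintro ⟨i, j⟩ _ ⟨i', j'⟩ _ h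
      simp only [Function.onFun, Finset.disjoint_left]
      intro t h1 h2
      simp only [Finset.mem_filter, Finset.mem_map, Finset.mem_product,
        BinaryTree.mem_treesOfNumNodesEq] at h1 h2
      obtain ⟨⟨⟨a, b⟩, ⟨h3, h4⟩, rfl⟩, -⟩ := h1
      obtain ⟨⟨⟨a', b'⟩, ⟨h5, h6⟩, h7⟩, -⟩ := h2
      change BinaryTree.node () a' b' = BinaryTree.node () a b at h7
      simp at h7 h3 h4 h5 h6
      apply h
      rw [← h3, ← h4, ← h5, ← h6, h7.1, h7.2]

lemma gf_one : gf (fun t => t = .node () .nil .nil) = PowerSeries.X := by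
  have := gf_node (fun t => t = .nil) (fun t => t = .nil)
  rw [gf_nil, mul_one, mul_one] at this
  rw [← this]
  apply gf_congr
  simp

lemma gf_rec (P P0 P1 P2 : BinaryTree Unit → Prop) (h0 : P .nil)
    (h2 : ∀ t, P2 t → t ≠ .nil)
    (h : ∀ l r, P (.node () l r) ↔ (P0 l ∧ r = .nil) ∨ (P1 l ∧ P2 r)) :
    gf P = 1 + PowerSeries.X * gf P0 + PowerSeries.X * (gf P1 * gf P2) := by
  have e : gf P0 = gf P0 * gf (fun t => t = .nil) := by rw [gf_nil, mul_one]
  rw [e, ← gf_node, ← gf_node, ← gf_nil, ← gf_or, ← gf_or]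
  · apply gf_congr
    intro t
    rcases t with _ | ⟨_, l, r⟩
    · simp [h0]
    · rw [h]; simp; tauto
  · rintro t (rfl | ⟨l, r, rfl, -, h4⟩) ⟨l', r', h5, h6, h7⟩
    · simp at h5
    · simp at h5
      apply h2 _ h7
      rw [← h5.2, h4]
  · rintro t rfl ⟨l', r', h5, h6, h7⟩
    simp at h5

lemma gf_ne_nil (P : BinaryTree Unit → Prop) (h0 : P .nil) :
    gf (fun t => P t ∧ t ≠ .nil) = gf P - 1 := by
  rw [← gf_nil, eq_sub_iff_add_eq, ← gf_or]
  · apply gf_congr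
    intro t
    by_cases ht : t = .nil
    · simp [ht, h0]
    · simp [ht]
  · tauto

lemma nn_cases (t : BinaryTree Unit) : t = .nil ∨ t = .node () .nil .nil ∨ 2 ≤ t.numNodes := by
  rcases t with _ | ⟨_, _ | ⟨_, l, r⟩, _ | ⟨_, l', r'⟩⟩ <;> simp [BinaryTree.numNodes]
  omega

lemma gf_two (P : BinaryTree Unit → Prop) (h0 : P .nil) (h1 : P (.node () .nil .nil)) :
    gf (fun t => P t ∧ 2 ≤ t.numNodes) = gf P - 1 - PowerSeries.X := by
  rw [← gf_ne_nil P h0, ← gf_one, eq_sub_iff_add_eq, ← gf_or]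
  · apply gf_congr
    intro t
    rcases nn_cases t with rfl | rfl | h
    · simp [BinaryTree.numNodes]
    · simp [h1]
    · have h3 : t ≠ .node () .nil .nil := by
        rintro rfl; simp [BinaryTree.numNodes] at h
      simp [h, h3, nn t h]
  · rintro t ⟨-, h⟩ rfl; simp [BinaryTree.numNodes] at h

open PowerSeries in
lemma gfA_eq : gf PA = 1 + X * gf PA + X ^ 2 * gf PA + X ^ 3 * gf PA ^ 2 := by
  have d0 : PD .nil := ⟨PA_nil, NE_nil, NS_nil⟩
  have d1 : PD (.node () .nil .nil) := by rw [recD]; exact Or.inl ⟨d0, rfl⟩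
  have c0 : PC .nil := ⟨PA_nil, NS_nil⟩
  have hA := gf_rec PA PA PB (fun r => PC r ∧ r ≠ .nil) PA_nil (fun t h => h.2) recA
  have hB := gf_rec PB PB PB (fun r => PD r ∧ 2 ≤ r.numNodes) ⟨PA_nil, NE_nil⟩
    (fun t h => nn _ h.2) recB
  have hC := gf_rec PC PC (fun l => PD l ∧ l ≠ .nil) (fun r => PC r ∧ r ≠ .nil) c0
    (fun t h => h.2) recC
  have hD := gf_rec PD PD (fun l => PD l ∧ l ≠ .nil) (fun r => PD r ∧ 2 ≤ r.numNodes) d0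
    (fun t h => nn _ h.2) recD
  rw [gf_ne_nil _ c0] at hA hC
  rw [gf_ne_nil _ d0] at hC hD
  rw [gf_two _ d0 d1] at hB hD
  obtain ⟨T, hT⟩ : ∃ T, T = (gf PD - 1) + (gf PD - 1) ^ 2 - X * (gf PD - 1) := ⟨_, rfl⟩
  have hFT : gf PD - 1 = X * (1 + T) := by rw [hT]; linear_combination hD
  obtain ⟨U, hUe⟩ : ∃ U, U = (1 + T) * (1 + (gf PD - 1) - X) := ⟨_, rfl⟩
  have hTU : T = X * U := by
    rw [hUe]; linear_combination hT + (1 + (gf PD - 1) - X) * hFT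
  have hD2 : gf PD = 1 + X + X ^ 2 * U := by linear_combination hFT + X * hTU
  have hU : U = 1 + X * U + X ^ 2 * U + X ^ 3 * U ^ 2 := by
    linear_combination hUe + (1 + (gf PD - 1) - X) * hTU + (1 + X * U) * hD2
  rw [hD2] at hB hC
  have hC2 : gf PC = 1 + X * U := by linear_combination U * hC - (gf PC - 1) * hU
  have hB2 : gf PB = 1 + X * U := by linear_combination (1 + X * U) * hB - gf PB * X * hU
  rw [hB2, hC2] at hA
  have hAU : (1 - X) * gf PA = (1 - X) * U := by linear_combination hA - hU
  have hne : (1 - X : PowerSeries ℤ) ≠ 0 := by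
    intro h
    have := congrArg (coeff 0) h
    simp at this
  rw [mul_left_cancel₀ hne hAU]
  exact hU

lemma S_rec (n : ℕ) : secStruct (n + 2) = secStruct (n + 1) + secStruct n +
      ∑ k ∈ Finset.range n, secStruct k * secStruct (n - 1 - k) := by
  rw [secStruct, Finset.sum_attach (Finset.range n) (fun k => secStruct k * secStruct (n - 1 - k))]

open PowerSeries in
lemma S_unique (f : PowerSeries ℤ) (h : f = 1 + X * f + X ^ 2 * f + X ^ 3 * f ^ 2) (n : ℕ) :
    coeff n f = (secStruct n : ℤ) := by
  have h' : f = 1 + X * (f + X * (f + X * (f * f))) := by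
    linear_combination h
  induction n using Nat.strong_induction_on with
  | _ n ih =>
    rcases n with _ | _ | n
    · rw [h']; simp [secStruct]
    · have i0 := ih 0 (by omega)
      rw [h', map_add, coeff_succ_X_mul, map_add]
      simp [secStruct, coeff_one] at i0 ⊢
      exact i0
    · rw [h', map_add, coeff_succ_X_mul, map_add, coeff_succ_X_mul, map_add, ih _ (by omega),
        ih _ (by omega), S_rec, coeff_one, if_neg (by omega), zero_add]
      push_cast
      rw [← add_assoc]
      congr 1
      rcases n with _ | n
      · simp
      · rw [coeff_succ_X_mul, coeff_mul, Finset.Nat.sum_antidiagonal_eq_sum_range_succ_mk]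
        apply Finset.sum_congr rfl
        intro k hk
        have := Finset.mem_range.1 hk
        rw [ih _ (by omega), ih _ (by omega)]
        simp

def good (n : ℕ) (w : List ℕ) : Prop := w.Nodup ∧ w.length = n ∧ ∀ x ∈ w, x < n

lemma good.mem {n : ℕ} {w : List ℕ} (h : good n w) {x : ℕ} (hx : x < n) : x ∈ w := by
  have h1 : w.toFinset = Finset.range n := by
    apply Finset.eq_of_subset_of_card_le
    · intro y hy
      simpa using h.2.2 y (by simpa using hy)
    · rw [List.toFinset_card_of_nodup h.1, h.2.1]; simp
  have : x ∈ w.toFinset := by rw [h1]; simpa using hx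
  simpa using this

def av (w : List ℕ) : Prop := w.Triplewise (fun x y z => ¬ (x < z ∧ z < y))

lemma word_nodup (t : BinaryTree Unit) : (word t).Nodup := by
  induction t with
  | nil => simp [word]
  | node _ l r hl hr =>
    have h1 := top_lt l r
    have h2 := mid_lt (word l) r
    rw [word, List.nodup_append]
    refine ⟨hl.map (add_left_injective _), ?_, ?_⟩
    · rw [List.nodup_cons]
      exact ⟨fun h => lt_irrefl _ (h1.2 _ h), hr⟩
    · intro a ha b hb
      rw [List.mem_cons] at hb
      rcases hb with rfl | hb
      · exact (h1.1 _ ha).ne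
      · exact (h2 _ ha _ hb).ne'

lemma word_good (t : BinaryTree Unit) : good t.numNodes (word t) := by
  refine ⟨word_nodup t, word_length t, ?_⟩
  rw [← word_length]; exact word_lt t

lemma word_av (t : BinaryTree Unit) : av (word t) := by
  induction t with
  | nil => simp [word, av]
  | node _ l r hl hr =>
    have h1 := top_lt l r
    have h2 := mid_lt (word l) r
    unfold av at *
    rw [word, List.triplewise_append, List.triplewise_map, List.triplewise_cons]
    refine ⟨hl.imp (by intro a b c; omega), ⟨?_, hr⟩, ?_, ?_⟩
    · refine List.pairwise_of_forall_mem_list ?_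
      intro x hx y hy
      have := h1.2 y hy
      omega
    · intro a ha
      rw [List.pairwise_cons]
      constructor
      · intro y hy
        have := h2 a ha y hy
        omega
      · refine List.pairwise_of_forall_mem_list ?_
        intro x hx y hy
        have := h2 a ha y hy
        omega
    · intro a ha
      refine List.pairwise_of_forall_mem_list ?_
      intro x hx y hy
      rw [List.mem_cons] at ha
      rcases ha with rfl | ha
      · have := h1.1 y hy; omega
      · have := h2 x hx a ha; omega

lemma word_inj (s t : BinaryTree Unit) (h : word s = word t) : s = t := by
  induction s generalizing t with
  | nil => exact ((word_nil_iff t).1 (by rw [← h, word])).symm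
  | node _ l r hl hr =>
    rcases t with _ | ⟨_, l', r'⟩
    · simp [word] at h
    · have hlen := congrArg List.length h
      simp only [word, List.length_append, List.length_map, List.length_cons] at h hlen
      have e : (word l).length + (word r).length = (word l').length + (word r').length := by omega
      have h1 := top_lt l r
      rw [List.append_cons_inj_of_notMem] at h
      · obtain ⟨h3, -, h4⟩ := h
        rw [h4] at h3
        have h5 := List.map_injective_iff.2 (add_left_injective _) h3
        rw [hl _ h5, hr _ h4]
      · intro hx; have := h1.1 _ hx; omega
      · intro hx; have := h1.2 _ hx; omega

lemma word_surj (n : ℕ) : ∀ w, good n w → av w → ∃ t : BinaryTree Unit, word t = w := by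
  induction n using Nat.strong_induction_on with
  | _ n ih =>
    intro w hg ha
    rcases n with _ | n
    · exact ⟨.nil, by rw [word]; exact (List.length_eq_zero_iff.1 hg.2.1).symm⟩
    · have hn : n ∈ w := hg.mem (by omega)
      obtain ⟨L, R, rfl⟩ := List.append_of_mem hn
      unfold av at ha
      rw [List.triplewise_append, List.triplewise_cons] at ha
      obtain ⟨aL, ⟨-, aR⟩, aX, -⟩ := ha
      obtain ⟨gn, gl, gx⟩ := id hg
      rw [List.nodup_append, List.nodup_cons] at gn
      obtain ⟨nL, ⟨nR0, nR⟩, nX⟩ := gn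
      have hLn : n ∉ L := fun h => nX n h n (by simp) rfl
      have hL : ∀ x ∈ L, x < n := fun x hx => by
        have := gx x (by simp [hx])
        have : x ≠ n := by rintro rfl; exact hLn hx
        omega
      have hR : ∀ x ∈ R, x < n := fun x hx => by
        have := gx x (by simp [hx])
        have : x ≠ n := by rintro rfl; exact nR0 hx
        omega
      have hLR : ∀ x ∈ L, ∀ z ∈ R, z < x := fun x hx z hz => by
        have h1 := (List.pairwise_cons.1 (aX x hx)).1 z hz
        have h2 := hR z hz
        have h3 := nX x hx z (by simp [hz])
        omega
      have hRlt : ∀ z ∈ R, z < R.length := by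
        intro z hz
        have hsub : Finset.range (z + 1) ⊆ R.toFinset := by
          intro y hy
          have hy : y < z + 1 := by simpa using hy
          have hzn := hR z hz
          have hm := hg.mem (x := y) (by omega)
          rw [List.mem_append, List.mem_cons] at hm
          rcases hm with hm | hm | hm
          · have := hLR y hm z hz; omega
          · omega
          · simpa using hm
        have := Finset.card_le_card hsub
        rw [List.toFinset_card_of_nodup nR] at this
        simpa using this
      have gR : good R.length R := ⟨nR, rfl, hRlt⟩
      have hlen : L.length + R.length = n := by
        simp at gl; omega
      have hLge : ∀ x ∈ L, R.length ≤ x := by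
        intro x hx
        by_contra hc
        exact nX x hx x (by simp [gR.mem (x := x) (by omega)]) rfl
      have eL : (L.map (· - R.length)).map (· + R.length) = L := by
        rw [List.map_map]
        conv_rhs => rw [← List.map_id L]
        apply List.map_congr_left
        intro x hx
        have := hLge x hx
        simp; omega
      have gL : good L.length (L.map (· - R.length)) := by
        refine ⟨?_, by simp, ?_⟩
        · apply List.Nodup.of_map (· + R.length)
          rw [eL]; exact nL
        · intro x hx
          obtain ⟨y, hy, rfl⟩ := List.mem_map.1 hx
          have := hL y hy
          have := hLge y hy
          simp; omega
      have aL' : av (L.map (· - R.length)) := by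
        rw [← eL, List.triplewise_map] at aL
        exact aL.imp (by intro a b c; omega)
      obtain ⟨l, hl⟩ := ih L.length (by omega) _ gL aL'
      obtain ⟨r, hr⟩ := ih R.length (by omega) _ gR aR
      refine ⟨.node () l r, ?_⟩
      rw [word, hl, hr, eL, List.length_map, hlen]

/-- one-line notation -/
def oln {n : ℕ} (π : Equiv.Perm (Fin n)) : List ℕ := List.ofFn (fun i => (π i : ℕ))

lemma oln_inj (n : ℕ) : Function.Injective (oln (n := n)) := by
  intro π σ h
  have := List.ofFn_injective h
  ext i
  exact congrFun this i

lemma oln_good {n : ℕ} (π : Equiv.Perm (Fin n)) : good n (oln π) := by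
  refine ⟨?_, by simp [oln], ?_⟩
  · rw [oln, List.nodup_ofFn]
    exact Fin.val_injective.comp π.injective
  · intro x hx
    rw [oln, List.mem_ofFn] at hx
    obtain ⟨i, rfl⟩ := hx
    exact (π i).2

lemma oln_surj {n : ℕ} (w : List ℕ) (h : good n w) : ∃ π : Equiv.Perm (Fin n), oln π = w := by
  obtain ⟨h1, rfl, h3⟩ := h
  let f : Fin w.length → Fin w.length := fun i => ⟨w[i], h3 _ (List.getElem_mem _)⟩
  have hf : Function.Injective f := by
    intro i j hij
    have : w[i] = w[j] := congrArg Fin.val hij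
    exact List.nodup_iff_injective_get.1 h1 this
  refine ⟨Equiv.ofBijective f (Finite.injective_iff_bijective.1 hf), ?_⟩
  rw [oln]
  apply List.ext_getElem
  · simp
  · intro i h1 h2
    simp [f]

lemma av_iff {n : ℕ} (π : Equiv.Perm (Fin n)) : av (oln π) ↔ ¬ Contains132 π := by
  unfold av Contains132
  rw [List.triplewise_iff_getElem]
  constructor
  · rintro h ⟨a, b, c, hab, hbc, h1, h2⟩
    apply h a b c hab hbc (by simp [oln])
    simpa [oln] using ⟨h1, h2⟩
  · intro h i j k hij hjk hk h1
    simp only [oln, List.length_ofFn] at hk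
    apply h
    refine ⟨⟨i, by omega⟩, ⟨j, by omega⟩, ⟨k, hk⟩, hij, hjk, ?_⟩
    simpa [oln] using h1

lemma ndd_iff (w : List ℕ) :
    ¬ ndd w ↔ ∃ u a b c v, w = u ++ a :: b :: c :: v ∧ b < a ∧ c < b := by
  induction w with
  | nil => simp [ndd]
  | cons x w ih =>
    rw [ndd_cons, not_and_or, ih]
    constructor
    · rintro (⟨u, a, b, c, v, rfl, h⟩ | h)
      · exact ⟨x :: u, a, b, c, v, rfl, h⟩
      · push Not at h
        obtain ⟨b, c, t, rfl, h⟩ := h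
        exact ⟨[], x, b, c, t, rfl, h⟩
    · rintro ⟨_ | ⟨y, u⟩, a, b, c, v, h1, h⟩
      · simp at h1
        obtain ⟨rfl, rfl⟩ := h1
        right
        intro h'
        exact h' b c v rfl h
      · simp at h1
        exact Or.inl ⟨u, a, b, c, v, h1.2, h⟩

lemma rst_iff (k : ℕ) (w : List ℕ) : ¬ ndd (rst k w) ↔
    ∃ u m m' v a b c, w = u ++ a :: (m ++ b :: (m' ++ c :: v)) ∧ a < k ∧ b < k ∧ c < k ∧
      (∀ x ∈ m, k ≤ x) ∧ (∀ x ∈ m', k ≤ x) ∧ c < b ∧ b < a := by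
  rw [ndd_iff]
  constructor
  · rintro ⟨u, a, b, c, v, h, h1, h2⟩
    rw [rst, List.filter_eq_append_iff] at h
    obtain ⟨w1, w2, rfl, -, h⟩ := h
    rw [List.filter_eq_cons_iff] at h
    obtain ⟨w3, w4, rfl, -, ha, h⟩ := h
    rw [List.filter_eq_cons_iff] at h
    obtain ⟨m, w4, rfl, hm, hb, h⟩ := h
    rw [List.filter_eq_cons_iff] at h
    obtain ⟨m', v, rfl, hm', hc, -⟩ := h
    refine ⟨w1 ++ w3, m, m', v, a, b, c, by simp, ?_⟩
    simp at *
    tauto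
  · rintro ⟨u, m, m', v, a, b, c, rfl, ha, hb, hc, hm, hm', h1, h2⟩
    refine ⟨rst k u, a, b, c, rst k v, ?_, h2, h1⟩
    have e : ∀ m : List ℕ, (∀ x ∈ m, k ≤ x) → m.filter (fun x => decide (x < k)) = [] := by
      intro m hm
      simpa using hm
    simp [rst, List.filter_append, List.filter_cons, ha, hb, hc]
    rw [e m hm, e m' hm']; rfl

lemma split_at (w : List ℕ) (i j : ℕ) (hij : i < j) (hj : j < w.length) :
    w.drop (i + 1) = (w.drop (i + 1)).take (j - i - 1) ++ w[j] :: w.drop (j + 1) := by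
  conv_lhs => rw [← List.take_append_drop (j - i - 1) (w.drop (i + 1))]
  rw [List.drop_drop, show i + 1 + (j - i - 1) = j by omega, List.drop_eq_getElem_cons hj]

lemma mem_seg (w : List ℕ) (i j : ℕ) (x : ℕ) (hj : j < w.length)
    (hx : x ∈ (w.drop (i + 1)).take (j - i - 1)) :
    ∃ (m : ℕ) (hm : m < w.length), i < m ∧ m < j ∧ w[m] = x := by
  obtain ⟨p, hp, rfl⟩ := List.mem_iff_getElem.1 hx
  simp at hp
  exact ⟨i + 1 + p, by omega, by omega, by omega, by simp⟩

lemma simsun_iff {n : ℕ} (π : Equiv.Perm (Fin n)) :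
    IsSimsun π ↔ ∀ k, ndd (rst k (oln π)) := by
  unfold IsSimsun
  apply forall_congr'
  intro k
  rw [not_iff_comm, rst_iff]
  have hget : ∀ (i : ℕ) (hi : i < (oln π).length) (hi' : i < n),
      (oln π)[i] = (π ⟨i, hi'⟩ : ℕ) := by intros; simp [oln]
  have hlen : (oln π).length = n := by simp [oln]
  constructor
  · rintro ⟨u, m, m', v, a, b, c, hw, ha, hb, hc, hm, hm', h1, h2⟩
    have hl := congrArg List.length hw
    simp only [List.length_append, List.length_cons, hlen] at hl
    have key : ∀ (i : ℕ) (hi : i < n), (π ⟨i, hi⟩ : ℕ) =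
        (u ++ a :: (m ++ b :: (m' ++ c :: v)))[i]'(by simp; omega) := by
      intro i hi
      rw [← hget i (by omega) hi]
      simp only [hw]
    have ka : (π ⟨u.length, by omega⟩ : ℕ) = a := by rw [key]; simp
    have kb : (π ⟨u.length + 1 + m.length, by omega⟩ : ℕ) = b := by
      rw [← hget _ (by omega)]
      exact List.getElem_of_append (l₁ := u ++ a :: m) (l₂ := m' ++ c :: v) (by simp [hw])
        (by simp; omega)
    have kc : (π ⟨u.length + 1 + m.length + 1 + m'.length, by omega⟩ : ℕ) = c := by
      rw [← hget _ (by omega)]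
      exact List.getElem_of_append (l₁ := u ++ a :: (m ++ b :: m')) (l₂ := v) (by simp [hw])
        (by simp; omega)
    refine ⟨⟨u.length, by omega⟩, ⟨u.length + 1 + m.length, by omega⟩,
      ⟨u.length + 1 + m.length + 1 + m'.length, by omega⟩, ?_, ?_, ?_⟩
    · simp; omega
    · simp; omega
    · rw [ka, kb, kc]
      refine ⟨ha, hb, hc, ?_, ?_, h1, h2⟩
      · rintro ⟨i, hi⟩ h3 h4
        simp at h3 h4
        apply hm
        rw [key]
        grind
      · rintro ⟨i, hi⟩ h3 h4
        simp at h3 h4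
        apply hm'
        rw [key]
        grind
  · rintro ⟨⟨a, ha⟩, ⟨b, hb⟩, ⟨c, hc⟩, hab, hbc, h1, h2, h3, h4, h5, h6, h7⟩
    simp only [Fin.mk_lt_mk] at hab hbc
    refine ⟨(oln π).take a, ((oln π).drop (a + 1)).take (b - a - 1),
      ((oln π).drop (b + 1)).take (c - b - 1), (oln π).drop (c + 1), π ⟨a, ha⟩, π ⟨b, hb⟩,
      π ⟨c, hc⟩, ?_, h1, h2, h3, ?_, ?_, h6, h7⟩
    · rw [← hget a (by omega), ← hget b (by omega), ← hget c (by omega),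
        ← split_at _ b c hbc, ← split_at _ a b hab, ← List.drop_eq_getElem_cons,
        List.take_append_drop]
    · intro x hx
      obtain ⟨i, hi, hi1, hi2, rfl⟩ := mem_seg _ _ _ _ (by omega) hx
      rw [hget i hi (by omega)]
      exact h4 _ hi1 hi2
    · intro x hx
      obtain ⟨i, hi, hi1, hi2, rfl⟩ := mem_seg _ _ _ _ (by omega) hx
      rw [hget i hi (by omega)]
      exact h5 _ hi1 hi2

open Classical in
lemma card_eq (n : ℕ) : Nat.card {π : Equiv.Perm (Fin n) // IsSimsun π ∧ ¬ Contains132 π} =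
    ((BinaryTree.treesOfNumNodesEq n).filter PA).card := by
  have e : oln '' {π : Equiv.Perm (Fin n) | IsSimsun π ∧ ¬ Contains132 π} =
      word '' (((BinaryTree.treesOfNumNodesEq n).filter PA : Finset _) :
        Set (BinaryTree Unit)) := by
    ext w
    constructor
    · rintro ⟨π, ⟨h1, h2⟩, rfl⟩
      rw [simsun_iff] at h1
      rw [← av_iff] at h2
      obtain ⟨t, ht⟩ := word_surj n _ (oln_good π) h2
      refine ⟨t, ?_, ht⟩
      simp only [Finset.coe_filter, BinaryTree.mem_treesOfNumNodesEq, Set.mem_ofPred_eq]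
      refine ⟨?_, ?_⟩
      · rw [← word_length, ht, (oln_good π).2.1]
      · intro k; rw [ht]; exact h1 k
    · rintro ⟨t, ht, rfl⟩
      simp only [Finset.coe_filter, BinaryTree.mem_treesOfNumNodesEq, Set.mem_ofPred_eq] at ht
      obtain ⟨rfl, h2⟩ := ht
      obtain ⟨π, hπ⟩ := oln_surj _ (word_good t)
      refine ⟨π, ⟨?_, ?_⟩, hπ⟩
      · rw [simsun_iff, hπ]; exact h2
      · rw [← av_iff, hπ]; exact word_av t
  have h := congrArg Set.ncard e
  rw [Set.ncard_image_of_injective _ (oln_inj n),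
    Set.ncard_image_of_injective _ (fun s t => word_inj s t), Set.ncard_coe_finset] at h
  rw [← h]
  rfl

end SimsunAux

/-- The number of simsun permutations of `{1, …, n}` avoiding the pattern 132
equals the secondary structure number `S n`. -/
theorem simsun_avoid132_count (n : ℕ) :
    Nat.card {π : Equiv.Perm (Fin n) // IsSimsun π ∧ ¬ Contains132 π} = secStruct n := by
  classical
  have h := SimsunAux.S_unique _ SimsunAux.gfA_eq n
  rw [SimsunAux.gf_coeff] at h
  rw [SimsunAux.card_eq]
  exact_mod_cast h
end

section
/- For every n ≥ 0, the number of simsun permutations of {1,…,n} that avoid both patterns 132 and 213 equals the Fibonacci number F_{n+1} (with F_1 = F_2 = 1). -/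
/-- `π` contains the pattern 213. -/
def Contains213 {n : ℕ} (π : Equiv.Perm (Fin n)) : Prop :=
  ∃ a b c : Fin n, a < b ∧ b < c ∧ π b < π a ∧ π a < π c

def NDD {n : ℕ} (π : Equiv.Perm (Fin n)) : Prop :=
  ∀ i j l : Fin n, (j : ℕ) = i + 1 → (l : ℕ) = j + 1 → π j < π i → ¬ π l < π j

def Av {n : ℕ} (π : Equiv.Perm (Fin n)) : Prop := ¬ Contains132 π ∧ ¬ Contains213 π

lemma simsun_iff {n : ℕ} (π : Equiv.Perm (Fin n)) (h : Av π) : IsSimsun π ↔ NDD π := by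
  constructor
  · intro hs i j l hj hl h1 h2
    apply hs n
    refine ⟨i, j, l, by omega, by omega, (π i).2, (π j).2, (π l).2, ?_, ?_, h2, h1⟩
    · intro m _ _; omega
    · intro m _ _; omega
  · rintro hd k ⟨a, b, c, hab, hbc, ha, hb, hc, h1, h2, h3, h4⟩
    have hc' : (c : ℕ) = b + 1 := by
      by_contra hne
      let m : Fin n := ⟨b + 1, by omega⟩
      have hm1 : b < m := by simp only [m, Fin.lt_def]; omega
      have hm2 : m < c := by simp only [m, Fin.lt_def]; omega
      have := h2 m hm1 hm2
      exact h.2 ⟨a, b, m, hab, hm1, h4, by rw [Fin.lt_def]; omega⟩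
    let m : Fin n := ⟨b - 1, by omega⟩
    have hmv : (m : ℕ) = b - 1 := rfl
    have hbm : (b : ℕ) = m + 1 := by omega
    refine hd m b c hbm hc' ?_ h3
    by_cases e : m = a
    · rw [e]; exact h4
    · have hne : (m : ℕ) ≠ a := fun h => e (Fin.ext h)
      have := h1 m (by rw [Fin.lt_def]; omega) (by rw [Fin.lt_def]; omega)
      rw [Fin.lt_def]; omega

noncomputable def ins {n : ℕ} (p : Fin (n + 1)) (σ : Equiv.Perm (Fin n)) :
    Equiv.Perm (Fin (n + 1)) :=
  Equiv.ofBijective (Fin.cons p (fun i => p.succAbove (σ i)) : Fin (n + 1) → Fin (n + 1))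
    (Finite.injective_iff_bijective.1 (by
      rw [Fin.cons_injective_iff]
      refine ⟨?_, ?_⟩
      · rintro ⟨i, hi⟩
        exact Fin.succAbove_ne p _ hi
      · exact Fin.succAbove_right_injective.comp σ.injective))

@[simp] lemma ins_zero {n : ℕ} (p : Fin (n + 1)) (σ : Equiv.Perm (Fin n)) : ins p σ 0 = p := rfl

@[simp] lemma ins_succ {n : ℕ} (p : Fin (n + 1)) (σ : Equiv.Perm (Fin n)) (i : Fin n) :
    ins p σ i.succ = p.succAbove (σ i) := rfl

lemma ins_inj {n : ℕ} {p q : Fin (n + 1)} {σ τ : Equiv.Perm (Fin n)} (h : ins p σ = ins q τ) :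
    p = q ∧ σ = τ := by
  have h0 : p = q := by simpa using congrArg (fun f => f 0) h
  subst h0
  refine ⟨rfl, Equiv.ext fun i => ?_⟩
  have := congrArg (fun f => f i.succ) h
  simpa using this

lemma ins_surj {n : ℕ} (π : Equiv.Perm (Fin (n + 1))) : ∃ p σ, π = ins p σ := by
  have h : ∀ i : Fin n, ∃ y, (π 0).succAbove y = π i.succ := fun i =>
    Fin.exists_succAbove_eq (fun h => Fin.succ_ne_zero i (π.injective h))
  choose f hf using h
  have hinj : Function.Injective f := by
    intro i j hij
    have : π i.succ = π j.succ := by rw [← hf, ← hf, hij]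
    exact Fin.succ_injective _ (π.injective this)
  refine ⟨π 0, Equiv.ofBijective f (Finite.injective_iff_bijective.1 hinj), Equiv.ext fun i => ?_⟩
  cases i using Fin.cases with
  | zero => simp
  | succ i => simp [hf]

lemma av_ins {n : ℕ} (p : Fin (n + 2)) (σ : Equiv.Perm (Fin (n + 1))) :
    Av (ins p σ) ↔ Av σ ∧ (p = Fin.last _ ∨ p = (σ 0).castSucc) := by
  constructor
  · rintro ⟨h1, h2⟩
    refine ⟨⟨?_, ?_⟩, ?_⟩
    · rintro ⟨a, b, c, hab, hbc, h3, h4⟩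
      exact h1 ⟨a.succ, b.succ, c.succ, by simpa, by simpa, by simpa, by simpa⟩
    · rintro ⟨a, b, c, hab, hbc, h3, h4⟩
      exact h2 ⟨a.succ, b.succ, c.succ, by simpa, by simpa, by simpa, by simpa⟩
    · by_contra! hc
      obtain ⟨hl, h0⟩ := hc
      have pos : ∀ j : Fin (n + 1), σ j ≠ σ 0 → 0 < j := fun j hj =>
        Fin.pos_iff_ne_zero.2 (fun h => hj (by rw [h]))
      rcases lt_or_gt_of_ne h0 with h | h
      · have hp : (p : ℕ) < σ 0 := h
        obtain ⟨j, hj⟩ := σ.surjective ⟨p, by omega⟩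
        have hjv : (σ j : ℕ) = p := by rw [hj]
        refine h1 ⟨0, Fin.succ 0, j.succ, by simp, ?_, ?_, ?_⟩
        · exact Fin.succ_lt_succ_iff.2 (pos j (fun h => by rw [h] at hjv; omega))
        · rw [ins_zero, ins_succ, Fin.lt_succAbove_iff_le_castSucc, Fin.le_def]
          simp; omega
        · rw [ins_succ, ins_succ, Fin.succAbove_lt_succAbove_iff, Fin.lt_def]; omega
      · have hp : (σ 0 : ℕ) < p := h
        have hl' : (p : ℕ) ≠ n + 1 := fun h => hl (Fin.ext h)
        obtain ⟨j, hj⟩ := σ.surjective (Fin.last n)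
        have hjv : (σ j : ℕ) = n := by rw [hj]; rfl
        refine h2 ⟨0, Fin.succ 0, j.succ, by simp, ?_, ?_, ?_⟩
        · exact Fin.succ_lt_succ_iff.2 (pos j (fun h => by rw [h] at hjv; omega))
        · rw [ins_zero, ins_succ, Fin.succAbove_lt_iff_castSucc_lt]
          exact h
        · rw [ins_zero, ins_succ, Fin.lt_succAbove_iff_le_castSucc, Fin.le_def]
          simp; omega
  · rintro ⟨⟨h1, h2⟩, hp⟩
    constructor
    · rintro ⟨a, b, c, hab, hbc, h3, h4⟩
      cases c using Fin.cases with
      | zero => simp at hbc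
      | succ c =>
      cases b using Fin.cases with
      | zero => simp at hab
      | succ b =>
      rw [ins_succ, ins_succ, Fin.succAbove_lt_succAbove_iff] at h4
      rw [Fin.succ_lt_succ_iff] at hbc
      cases a using Fin.cases with
      | succ a => exact h1 ⟨a, b, c, by simpa using hab, hbc, by simpa using h3, h4⟩
      | zero =>
        rw [ins_zero, ins_succ] at h3
        rcases hp with rfl | rfl
        · exact absurd h3 (not_lt.2 (Fin.le_last _))
        · rw [Fin.lt_succAbove_iff_le_castSucc, Fin.castSucc_le_castSucc_iff] at h3
          have hb : 0 < b := Fin.pos_iff_ne_zero.2 (by rintro rfl; exact absurd h4 (not_lt.2 h3))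
          refine h1 ⟨0, b, c, hb, hbc, lt_of_le_of_ne h3 ?_, h4⟩
          intro h
          exact (hb.trans hbc).ne (σ.injective h)
    · rintro ⟨a, b, c, hab, hbc, h3, h4⟩
      cases c using Fin.cases with
      | zero => simp at hbc
      | succ c =>
      cases b using Fin.cases with
      | zero => simp at hab
      | succ b =>
      rw [Fin.succ_lt_succ_iff] at hbc
      cases a using Fin.cases with
      | succ a => exact h2 ⟨a, b, c, by simpa using hab, hbc, by simpa using h3, by simpa using h4⟩
      | zero =>
        rw [ins_zero, ins_succ] at h3 h4
        rcases hp with rfl | rfl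
        · exact absurd h4 (not_lt.2 (Fin.le_last _))
        · rw [Fin.lt_succAbove_iff_le_castSucc, Fin.castSucc_le_castSucc_iff] at h4
          rw [Fin.succAbove_lt_iff_castSucc_lt, Fin.castSucc_lt_castSucc_iff] at h3
          have hb : 0 < b := Fin.pos_iff_ne_zero.2 (by rintro rfl; exact lt_irrefl _ h3)
          refine h2 ⟨0, b, c, hb, hbc, h3, lt_of_le_of_ne h4 ?_⟩
          intro h
          exact (hb.trans hbc).ne (σ.injective h)

lemma ndd_of_ins {n : ℕ} {p : Fin (n + 1)} {σ : Equiv.Perm (Fin n)} (h : NDD (ins p σ)) :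
    NDD σ := by
  intro i j l hj hl h1 h2
  exact h i.succ j.succ l.succ (by simp [hj]) (by simp [hl]) (by simpa) (by simpa)

lemma ndd_ins {n : ℕ} {p : Fin (n + 3)} {σ : Equiv.Perm (Fin (n + 2))} (h : NDD σ)
    (h' : p ≤ (σ 0).castSucc ∨ σ 0 < σ 1) : NDD (ins p σ) := by
  intro i j l hj hl h1 h2
  cases j using Fin.cases with
  | zero => simp at hj
  | succ j =>
  cases l using Fin.cases with
  | zero => simp at hl
  | succ l =>
  cases i using Fin.cases with
  | succ i => exact h i j l (by simpa using hj) (by simpa using hl) (by simpa using h1) (by simpa using h2)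
  | zero =>
    have hj0 : j = 0 := by ext; simpa using hj
    subst hj0
    have hl1 : l = 1 := by ext; simpa using hl
    subst hl1
    rw [ins_succ, ins_succ, Fin.succAbove_lt_succAbove_iff] at h2
    rw [ins_zero, ins_succ, Fin.succAbove_lt_iff_castSucc_lt] at h1
    rcases h' with h' | h'
    · exact absurd h1 (not_lt.2 h')
    · exact lt_asymm h2 h'

lemma ndd_small {n : ℕ} (hn : n ≤ 2) (π : Equiv.Perm (Fin n)) : NDD π := by
  intro i j l hj hl; omega

lemma ndd_asc {n : ℕ} {σ : Equiv.Perm (Fin (n + 1))} (h : NDD σ) :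
    NDD (ins (σ 0).castSucc σ) := by
  cases n with
  | zero => exact ndd_small (by omega) _
  | succ n => exact ndd_ins h (Or.inl le_rfl)

lemma asc_lt {n : ℕ} (σ : Equiv.Perm (Fin (n + 1))) :
    ins (σ 0).castSucc σ 0 < ins (σ 0).castSucc σ 1 := by
  change ins (σ 0).castSucc σ 0 < ins (σ 0).castSucc σ (Fin.succ 0)
  rw [ins_zero, ins_succ, Fin.lt_succAbove_iff_le_castSucc]

abbrev G (n : ℕ) := {π : Equiv.Perm (Fin n) // Av π ∧ NDD π}

noncomputable def toG (n : ℕ) : G (n + 2) ⊕ G (n + 1) → G (n + 3)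
  | .inl σ => ⟨ins (σ.1 0).castSucc σ.1, (av_ins _ _).2 ⟨σ.2.1, Or.inr rfl⟩, ndd_asc σ.2.2⟩
  | .inr τ => ⟨ins (Fin.last _) (ins (τ.1 0).castSucc τ.1),
      (av_ins _ _).2 ⟨(av_ins _ _).2 ⟨τ.2.1, Or.inr rfl⟩, Or.inl rfl⟩,
      ndd_ins (ndd_asc τ.2.2) (Or.inr (asc_lt _))⟩

lemma toG_bij (n : ℕ) : Function.Bijective (toG n) := by
  constructor
  · rintro (⟨σ, hσ⟩ | ⟨σ, hσ⟩) (⟨τ, hτ⟩ | ⟨τ, hτ⟩) h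
    · have := (ins_inj (congrArg Subtype.val h)).2
      simp only at this
      subst this; rfl
    · have := (ins_inj (congrArg Subtype.val h)).1
      exact absurd this (Fin.castSucc_lt_last _).ne
    · have := (ins_inj (congrArg Subtype.val h)).1
      exact absurd this (Fin.castSucc_lt_last _).ne'
    · have := (ins_inj (ins_inj (congrArg Subtype.val h)).2).2
      simp only at this
      subst this; rfl
  · rintro ⟨π, hav, hnd⟩
    obtain ⟨p, σ, rfl⟩ := ins_surj π
    obtain ⟨hσ, hp⟩ := (av_ins _ _).1 hav
    have hnσ := ndd_of_ins hnd
    rcases hp with rfl | rfl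
    · obtain ⟨q, τ, rfl⟩ := ins_surj σ
      obtain ⟨hτ, hq⟩ := (av_ins _ _).1 hσ
      rcases hq with rfl | rfl
      · exfalso
        refine hnd 0 (Fin.succ 0) (Fin.succ (Fin.succ 0)) (by simp) (by simp) ?_ ?_
        · rw [ins_zero, ins_succ, Fin.succAbove_lt_iff_castSucc_lt]
          exact Fin.castSucc_lt_last _
        · rw [ins_succ, ins_succ, ins_succ, Fin.succAbove_lt_succAbove_iff, ins_zero,
            Fin.succAbove_lt_iff_castSucc_lt]
          exact Fin.castSucc_lt_last _
      · exact ⟨.inr ⟨τ, hτ, ndd_of_ins hnσ⟩, rfl⟩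
    · exact ⟨.inl ⟨σ, hσ, hnσ⟩, rfl⟩

lemma card_small (n : ℕ) (hn : n ≤ 2) : Nat.card (G n) = n.factorial := by
  have h : ∀ π : Equiv.Perm (Fin n), Av π ∧ NDD π := fun π =>
    ⟨⟨by rintro ⟨a, b, c, h1, h2, -⟩; omega, by rintro ⟨a, b, c, h1, h2, -⟩; omega⟩,
      ndd_small hn π⟩
  rw [Nat.card_congr (Equiv.subtypeUnivEquiv h), Nat.card_perm, Nat.card_fin]

lemma card_G : ∀ n : ℕ, Nat.card (G n) = Nat.fib (n + 1)
  | 0 => by rw [card_small 0 (by omega)]; rfl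
  | 1 => by rw [card_small 1 (by omega)]; rfl
  | 2 => by rw [card_small 2 (by omega)]; rfl
  | n + 3 => by
    rw [← Nat.card_eq_of_bijective _ (toG_bij n), Nat.card_sum, card_G (n + 2), card_G (n + 1),
      Nat.fib_add_two (n := n + 2), add_comm]

/-- The number of simsun permutations of `{1, …, n}` avoiding both 132 and 213
equals the Fibonacci number `F (n+1)` (with `F 1 = F 2 = 1`). -/
theorem simsun_avoid132_213_count (n : ℕ) :
    Nat.card {π : Equiv.Perm (Fin n) //
      IsSimsun π ∧ ¬ Contains132 π ∧ ¬ Contains213 π} = Nat.fib (n + 1) := by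
  rw [← card_G n]
  refine Nat.card_congr (Equiv.subtypeEquivRight fun π => ?_)
  constructor
  · rintro ⟨h, h'⟩
    exact ⟨h', (simsun_iff π h').1 h⟩
  · rintro ⟨h', h⟩
    exact ⟨(simsun_iff π h').2 h, h'⟩
end
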